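/- arXiv:2510.16839 — 4 statements merged into one kernel-verified Lean document; each statement's English description precedes it below -/
import Mathlib

section
/- Let W be a strongly connected aperiodic digraphon on a probability space (Ω,μ), let τ := ρ(W) > 0, and let w_L, w_R ∈ L²(Ω) be real left and right eigenfunctions for the eigenvalue τ with ⟨w_L, w_R⟩ = 1. Then there exist β ∈ (0,τ) and C > 0 such that for every ℓ ∈ ℕ and almost every (x,y) ∈ Ω²: |W^ℓ(x,y) − τ^ℓ w_R(x) w_L(y)| ≤ C·β^ℓ. -/
open MeasureTheory Filter Set Topology
open scoped ENNReal Real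

namespace Digraphon

variable {Ω : Type*} [MeasurableSpace Ω]

/-- `kpowAux μ Γ n` is the `(n+1)`-st kernel power of `Γ`. -/
noncomputable def kpowAux (μ : Measure Ω) (Γ : Ω → Ω → ℝ) : ℕ → Ω → Ω → ℝ
  | 0 => Γ
  | n + 1 => fun x y => ∫ z, Γ x z * kpowAux μ Γ n z y ∂μ

/-- `dpow μ Γ k` is the `k`-th kernel power of `Γ` (intended for `k ≥ 1`). -/
noncomputable def dpow (μ : Measure Ω) (Γ : Ω → Ω → ℝ) (k : ℕ) : Ω → Ω → ℝ :=
  kpowAux μ Γ (k - 1)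

noncomputable def kpowAuxC (μ : Measure Ω) (Γ : Ω → Ω → ℂ) : ℕ → Ω → Ω → ℂ
  | 0 => Γ
  | n + 1 => fun x y => ∫ z, Γ x z * kpowAuxC μ Γ n z y ∂μ

noncomputable def dpowC (μ : Measure Ω) (Γ : Ω → Ω → ℂ) (k : ℕ) : Ω → Ω → ℂ :=
  kpowAuxC μ Γ (k - 1)

/-- The set of points reachable from `x`. -/
def ReachOut (μ : Measure Ω) (Γ : Ω → Ω → ℝ) (x : Ω) : Set Ω :=
  {z | ∃ k : ℕ, 1 ≤ k ∧ 0 < dpow μ Γ k x z}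

/-- The reachability sequence from `x` to `y`. -/
def reachSeq (μ : Measure Ω) (Γ : Ω → Ω → ℝ) (x y : Ω) : Set ℕ :=
  {k : ℕ | 1 ≤ k ∧ 0 < dpow μ Γ k x y}

/-- A digraphon: a measurable kernel with values in `[0,1]`. -/
def IsDigraphon (Γ : Ω → Ω → ℝ) : Prop :=
  Measurable (Function.uncurry Γ) ∧ ∀ x y, Γ x y ∈ Set.Icc (0 : ℝ) 1

/-- `X` is strongly connected in `Γ`. -/
def StronglyConnectedIn (μ : Measure Ω) (Γ : Ω → Ω → ℝ) (X : Set Ω) : Prop :=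
  MeasurableSet X ∧ 0 < μ X ∧
    ∀ A B : Set Ω, MeasurableSet A → MeasurableSet B → A ∪ B = X → Disjoint A B →
      0 < μ A → 0 < μ B → 0 < ∫ x in A, ∫ y in B, Γ x y ∂μ ∂μ

/-- `X` is a strong component in `Γ`. -/
def StrongComponent (μ : Measure Ω) (Γ : Ω → Ω → ℝ) (X : Set Ω) : Prop :=
  StronglyConnectedIn μ Γ X ∧
    ∀ Y : Set Ω, MeasurableSet Y → 0 < μ (X ∩ Y) → 0 < μ (Y \ X) →
      ¬ StronglyConnectedIn μ Γ Y

/-- `X` is fragmented in `Γ`. -/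
def Fragmented (μ : Measure Ω) (Γ : Ω → Ω → ℝ) (X : Set Ω) : Prop :=
  ∀ Y : Set Ω, Y ⊆ X → MeasurableSet Y → ¬ StronglyConnectedIn μ Γ Y

/-- `τ` is an eigenvalue of the integral kernel operator of `Γ` on `L²(Ω;ℂ)`. -/
def IsEigenvalue (μ : Measure Ω) (Γ : Ω → Ω → ℝ) (τ : ℂ) : Prop :=
  ∃ f : Ω → ℂ, MemLp f 2 μ ∧ ¬(f =ᵐ[μ] 0) ∧
    ∀ᵐ x ∂μ, ∫ y, f y * (Γ y x : ℂ) ∂μ = τ * f x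

/-- The spectral radius of `Γ` (`0` if there are no eigenvalues). -/
noncomputable def specRad (μ : Measure Ω) (Γ : Ω → Ω → ℝ) : ℝ :=
  sSup (insert 0 {r : ℝ | ∃ τ : ℂ, IsEigenvalue μ Γ τ ∧ ‖τ‖ = r})

/-- The number of eigenvalues of modulus `specRad μ Γ`. -/
noncomputable def periphMult (μ : Measure Ω) (Γ : Ω → Ω → ℝ) : ℕ :=
  {τ : ℂ | IsEigenvalue μ Γ τ ∧ ‖τ‖ = specRad μ Γ}.ncard

/-- `P : ZMod d → Set Ω` witnesses graphical `d`-periodicity of `Γ`. -/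
def IsPeriodicityWitness (μ : Measure Ω) (Γ : Ω → Ω → ℝ) {d : ℕ} (P : ZMod d → Set Ω) : Prop :=
  (∀ j, MeasurableSet (P j)) ∧ Pairwise (Function.onFun Disjoint P) ∧ (⋃ j, P j) = Set.univ ∧
    ∀ j : ZMod d, (μ.prod μ) {p : Ω × Ω | p.1 ∈ P j ∧ p.2 ∉ P (j + 1) ∧ Γ p.1 p.2 ≠ 0} = 0

/-- `Γ` is graphically `d`-periodic. -/
def GraphPeriodic (μ : Measure Ω) (Γ : Ω → Ω → ℝ) (d : ℕ) : Prop :=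
  ∃ P : ZMod d → Set Ω, IsPeriodicityWitness μ Γ P

/-- `Γ` is aperiodic. -/
def Aperiodic (μ : Measure Ω) (Γ : Ω → Ω → ℝ) : Prop :=
  ∀ d : ℕ, 1 ≤ d → GraphPeriodic μ Γ d → d = 1

/-- `S ⊆ ℕ` is eventually `D`-periodic with shift `s`. -/
def EvPeriodic (D : ℕ) (s : ℤ) (S : Set ℕ) : Prop :=
  (∀ n ∈ S, (D : ℤ) ∣ ((n : ℤ) - s)) ∧
    ∃ k : ℕ, ∀ n : ℕ, k ≤ n → (((D : ℤ) ∣ ((n : ℤ) - s)) ↔ n ∈ S)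

/-- The homomorphism density `t(C_k, Γ)` of the directed `k`-cycle. -/
noncomputable def cycleDensity (μ : Measure Ω) (Γ : Ω → Ω → ℝ) (k : ℕ) : ℝ :=
  ∫ x : Fin k → Ω, ∏ i : Fin k, Γ (x i) (x (finRotate k i)) ∂(Measure.pi fun _ => μ)

/-- `Γ⟦A⟧` : the kernel equal to `Γ` on `A × A` and `0` elsewhere. -/
noncomputable def kerRestrict (Γ : Ω → Ω → ℝ) (A : Set Ω) : Ω → Ω → ℝ :=
  fun x y => (A ×ˢ A).indicator (Function.uncurry Γ) (x, y)

/-- Equality of sets modulo a `μ`-nullset. -/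
def AEEqSet (μ : Measure Ω) (A B : Set Ω) : Prop := μ ((A \ B) ∪ (B \ A)) = 0

/-- The normalized restriction of `μ` to `A`, as a measure on `↥A`. -/
noncomputable def subMeasure (μ : Measure Ω) (A : Set Ω) : Measure ↥A :=
  (μ A)⁻¹ • Measure.comap Subtype.val μ

/-- The restriction of a kernel to `A × A`, as a kernel on `↥A`. -/
def subKernel (Γ : Ω → Ω → ℝ) (A : Set Ω) : ↥A → ↥A → ℝ :=
  fun a b => Γ ↑a ↑b

/-- A finite oriented graph: no pair of antiparallel edges (in particular no loops). -/
structure OrientedGraph where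
  n : ℕ
  E : Finset (Fin n × Fin n)
  no_anti : ∀ e ∈ E, (e.2, e.1) ∉ E

/-- The homomorphism density `t(D, Γ)` of an oriented graph `D`. -/
noncomputable def homDensity (μ : Measure Ω) (Γ : Ω → Ω → ℝ) (D : OrientedGraph) : ℝ :=
  ∫ x : Fin D.n → Ω, ∏ e ∈ D.E, Γ (x e.1) (x e.2) ∂(Measure.pi fun _ => μ)

/-- The cut norm distance of two kernels. -/
noncomputable def cutNormDist (μ : Measure Ω) (U W : Ω → Ω → ℝ) : ℝ :=
  sSup {r : ℝ | ∃ S T : Set Ω, MeasurableSet S ∧ MeasurableSet T ∧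
    r = |∫ x in S, ∫ y in T, (U x y - W x y) ∂μ ∂μ|}

/-- The cut distance of two kernels. -/
noncomputable def cutDist (μ : Measure Ω) (U W : Ω → Ω → ℝ) : ℝ :=
  sInf {r : ℝ | ∃ e : Ω ≃ᵐ Ω, MeasurePreserving e μ μ ∧
    r = cutNormDist μ U (fun x y => W (e x) (e y))}

/- A bounded kernel acts on `L²` as a Hilbert–Schmidt, hence compact, operator, so its powers decay
like `b ^ n` with `b < s` as soon as all its eigenvalues have modulus less than `s`. This is
applied to the deflated kernel `W - τ w_R ⊗ w_L`, whose powers are `W ^ ℓ - τ ^ ℓ w_R ⊗ w_L`. If it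
had an eigenvalue `c` with `|c| ≥ τ` and eigenfunction `f`, then `f` would be an eigenfunction of
`W` orthogonal to `w_R`, and `|c| = τ`. As `W |f| ≥ τ |f|`, integrating against a positive
eigenfunction of the transpose shows that `|f|` is an eigenfunction for `τ`, and equality in the
triangle inequality makes the phase of `f` rotate by `c / τ` along almost every edge. Multiplying
`|f|` by powers of the phase gives eigenfunctions for `τ (c / τ) ^ n`; compactness makes the images
of two of them close, and so `c / τ` is a root of unity. The phase is then a periodic labelling of
`Ω`, so aperiodicity gives `c = τ`. Now the phase is constant along edges, hence constant, and
likewise for `w_R`, so `f` is not orthogonal to `w_R`. -/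

section Growth

lemma exists_pow_norm_le_of_spectralRadius_lt {A : Type*} [NormedRing A] [NormedAlgebra ℂ A]
    [CompleteSpace A] {a : A} {s : ℝ} (h : spectralRadius ℂ a < ENNReal.ofReal s) :
    ∃ b ∈ Ioo 0 s, ∃ C > 0, ∀ n, ‖a ^ n‖ ≤ C * b ^ n := by
  obtain ⟨c, hac, hcs⟩ := exists_between h
  lift c to NNReal using (hcs.trans ENNReal.ofReal_lt_top).ne with b
  have hb : 0 < b := ENNReal.coe_pos.1 (pos_of_gt hac)
  have hbs : (b : ℝ) < s := ENNReal.lt_ofReal_iff_toReal_lt ENNReal.coe_ne_top |>.1 hcs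
  have hpow : ∀ᶠ n in atTop, ‖a ^ n‖ ≤ 1 * ‖(b : ℝ) ^ n‖ := by
    filter_upwards [(spectrum.pow_nnnorm_pow_one_div_tendsto_nhds_spectralRadius a
      |>.eventually_lt_const hac), eventually_ne_atTop 0] with n hn hn0
    rw [one_div, ENNReal.rpow_inv_lt_iff (by positivity), ENNReal.rpow_natCast,
      ← ENNReal.coe_pow, ENNReal.coe_lt_coe] at hn
    simpa using NNReal.coe_le_coe.2 hn.le
  obtain ⟨C, hC, hle⟩ :=
    Asymptotics.bound_of_isBigO_nat_atTop (Asymptotics.IsBigO.of_bound 1 hpow)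
  exact ⟨b, ⟨hb, hbs⟩, C, hC, fun n => by simpa using hle (pow_pos (NNReal.coe_pos.2 hb) n).ne'⟩

lemma exists_pow_norm_le_of_eigenvalues_lt {E : Type*} [NormedAddCommGroup E] [NormedSpace ℂ E]
    [CompleteSpace E] {T : E →L[ℂ] E} (hT : IsCompactOperator T) {s : ℝ} (hs : 0 < s)
    (h : ∀ (c : ℂ) (f : E), f ≠ 0 → T f = c • f → ‖c‖ < s) :
    ∃ b ∈ Ioo 0 s, ∃ C > 0, ∀ n, ‖T ^ n‖ ≤ C * b ^ n := by
  apply exists_pow_norm_le_of_spectralRadius_lt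
  rcases subsingleton_or_nontrivial E with hE | hE
  · simpa [spectrum.SpectralRadius.of_subsingleton] using hs
  refine spectrum.spectralRadius_lt_of_forall_lt (r := s.toNNReal) T fun z hz => ?_
  rw [← NNReal.coe_lt_coe, Real.coe_toNNReal _ hs.le, coe_nnnorm]
  rcases eq_or_ne z 0 with rfl | hz0
  · simpa using hs
  obtain ⟨f, hf⟩ := ((hT.hasEigenvalue_iff_mem_spectrum hz0).2 hz).exists_hasEigenvector
  exact h z f hf.2 hf.apply_eq_smul

lemma exists_succ_le_mul_of_le_mul_pow {a : ℕ → ℝ} {b s C : ℝ} (ha : 0 < a 0) (hb : 0 ≤ b)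
    (hbs : b < s) (h : ∀ n, a n ≤ C * b ^ n) : ∃ n, a (n + 1) ≤ s * a n := by
  have hs : 0 < s := hb.trans_lt hbs
  by_contra! hgrow
  have hle : ∀ n, a 0 ≤ C * (b / s) ^ n := fun n => by
    rw [div_pow, mul_div_assoc', le_div_iff₀ (pow_pos hs n), mul_comm]
    exact (geom_le hs.le n fun k _ => (hgrow k).le).trans (h n)
  have hlim := (tendsto_pow_atTop_nhds_zero_of_lt_one (by positivity)
    ((div_lt_one hs).2 hbs)).const_mul C
  rw [mul_zero] at hlim
  exact ha.not_ge (ge_of_tendsto' hlim hle)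

end Growth

section Compact

variable {𝕜 E F : Type*} [NontriviallyNormedField 𝕜] [NormedAddCommGroup E] [NormedSpace 𝕜 E]
  [NormedAddCommGroup F] [NormedSpace 𝕜 F]

lemma exists_lt_norm_map_sub_lt {T : E →L[𝕜] F} (hT : IsCompactOperator T) {e : ℕ → E} {R : ℝ}
    (he : ∀ k, ‖e k‖ ≤ R) {δ : ℝ} (hδ : 0 < δ) : ∃ i j, i < j ∧ ‖T (e i) - T (e j)‖ < δ := by
  obtain ⟨a, -, φ, hφ, ha⟩ :=
    (hT.isCompact_closure_image_closedBall (𝕜₁ := 𝕜) (f := (T : E →ₗ[𝕜] F)) R).tendsto_subseq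
      (x := fun n => T (e n)) fun n => subset_closure ⟨e n, by simpa using he n, rfl⟩
  obtain ⟨N, hN⟩ := Metric.cauchySeq_iff.1 ha.cauchySeq δ hδ
  exact ⟨φ N, φ (N + 1), hφ N.lt_succ_self, by
    simpa [dist_eq_norm] using hN N le_rfl (N + 1) N.le_succ⟩

lemma exists_eigenvector_of_approx_eigenvector {T : E →L[𝕜] E} (hT : IsCompactOperator T)
    {S : Set E} (hS : IsClosed S) {t : 𝕜} (ht : t ≠ 0)
    (h : ∀ δ > 0, ∃ y ∈ S, ‖y‖ = 1 ∧ ‖T y - t • y‖ ≤ δ) :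
    ∃ y ∈ S, ‖y‖ = 1 ∧ T y = t • y := by
  choose y hyS hy1 hTy using fun n : ℕ => h (1 / (n + 1)) Nat.one_div_pos_of_nat
  obtain ⟨a, -, φ, hφ, ha⟩ :=
    (hT.isCompact_closure_image_closedBall (𝕜₁ := 𝕜) (f := (T : E →ₗ[𝕜] E)) 1).tendsto_subseq
      (x := fun n => T (y n)) fun n => subset_closure ⟨y n, by simp [hy1 n], rfl⟩
  have hzero : Tendsto (fun n => T (y n) - t • y n) atTop (𝓝 0) :=
    squeeze_zero_norm hTy tendsto_one_div_add_atTop_nhds_zero_nat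
  have hlim : Tendsto (fun n => y (φ n)) atTop (𝓝 (t⁻¹ • a)) := by
    have := (ha.sub (hzero.comp hφ.tendsto_atTop)).const_smul t⁻¹
    simpa [Function.comp_def, inv_smul_smul₀ ht] using this
  have hTa : T (t⁻¹ • a) = a := tendsto_nhds_unique ((T.continuous.tendsto _).comp hlim) ha
  refine ⟨t⁻¹ • a, hS.mem_of_tendsto hlim (.of_forall fun n => hyS _), ?_, ?_⟩
  · exact tendsto_nhds_unique hlim.norm (by simp [hy1])
  · rw [hTa, smul_inv_smul₀ ht]

end Compact

section KreinRutman

open scoped RealInnerProductSpace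

variable {E : Type*} [NormedAddCommGroup E] [InnerProductSpace ℝ E] [PartialOrder E]
  [IsOrderedAddMonoid E]

lemma norm_sub_sq_le_of_inner_nonneg (hinner : ∀ x y : E, 0 ≤ x → 0 ≤ y → 0 ≤ ⟪x, y⟫)
    {x y : E} (hx : 0 ≤ x) (hxy : x ≤ y) : ‖y - x‖ ^ 2 ≤ ‖y‖ ^ 2 - ‖x‖ ^ 2 := by
  have h := hinner x (y - x) hx (sub_nonneg.2 hxy)
  have hy : ‖y‖ ^ 2 = ‖x‖ ^ 2 + 2 * ⟪x, y - x⟫ + ‖y - x‖ ^ 2 := by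
    rw [← norm_add_sq_real, add_sub_cancel]
  linarith

variable {T : E →L[ℝ] E} {t : ℝ} {u : E}

lemma smul_pow_apply_le_pow_succ_apply (hT : ∀ x, 0 ≤ x → 0 ≤ T x) (htu : t • u ≤ T u) (n : ℕ) :
    t • (T ^ n) u ≤ (T ^ (n + 1)) u := by
  induction n with
  | zero => simpa using htu
  | succ n ih =>
    have h := hT _ (sub_nonneg.2 ih)
    rwa [map_sub, map_smul, sub_nonneg, ← mul_apply_eq_comp, ← mul_apply_eq_comp, ← pow_succ',
      ← pow_succ'] at h

variable [PosSMulMono ℝ E]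

lemma pow_smul_le_pow_apply (hT : ∀ x, 0 ≤ x → 0 ≤ T x) (ht : 0 ≤ t) (htu : t • u ≤ T u) (n : ℕ) :
    t ^ n • u ≤ (T ^ n) u := by
  induction n with
  | zero => simp
  | succ n ih =>
    rw [pow_succ', mul_smul]
    exact (smul_le_smul_of_nonneg_left ih ht).trans (smul_pow_apply_le_pow_succ_apply hT htu n)

/- Along the orbit `T ^ n u` the defect `T x - t x` is nonnegative, so its squared norm is at most
`‖T x‖² - t² ‖x‖²`; this is small relative to `‖x‖²` once `‖T x‖ / ‖x‖` is close to `t`, which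
the growth bound forces at some time. -/
lemma exists_nonneg_norm_map_sub_smul_le
    (hinner : ∀ x y : E, 0 ≤ x → 0 ≤ y → 0 ≤ ⟪x, y⟫) (hT : ∀ x, 0 ≤ x → 0 ≤ T x) (ht : 0 < t)
    (hu : 0 ≤ u) (hu0 : u ≠ 0) (htu : t • u ≤ T u)
    (hgrowth : ∀ b > t, ∃ C, ∀ n, ‖(T ^ n) u‖ ≤ C * b ^ n) {δ : ℝ} (hδ : 0 < δ) :
    ∃ x, 0 ≤ x ∧ x ≠ 0 ∧ ‖T x - t • x‖ ≤ δ * ‖x‖ := by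
  set s := √(t ^ 2 + δ ^ 2)
  obtain ⟨b, htb, hbs⟩ := exists_between (Real.lt_sqrt_of_sq_lt (by nlinarith) : t < s)
  obtain ⟨C, hC⟩ := hgrowth b htb
  obtain ⟨n, hn⟩ := exists_succ_le_mul_of_le_mul_pow (a := fun n => ‖(T ^ n) u‖)
    (by simpa using hu0) (ht.trans htb).le hbs hC
  have hle := smul_pow_apply_le_pow_succ_apply hT htu n
  have hge := pow_smul_le_pow_apply hT ht.le htu n
  rw [pow_succ', mul_apply_eq_comp] at hn hle
  set x := (T ^ n) u
  have hx : 0 ≤ x := (smul_nonneg (by positivity) hu).trans hge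
  refine ⟨x, hx, fun hx0 => hu0 ?_, ?_⟩
  · rw [hx0] at hge
    have h0 := hge.antisymm (smul_nonneg (by positivity) hu)
    exact (smul_eq_zero.1 h0).resolve_left (by positivity)
  · have hsq := norm_sub_sq_le_of_inner_nonneg hinner (smul_nonneg ht.le hx) hle
    have hn2 : ‖T x‖ ^ 2 ≤ (t ^ 2 + δ ^ 2) * ‖x‖ ^ 2 := by
      rw [← Real.sq_sqrt (show 0 ≤ t ^ 2 + δ ^ 2 by positivity), ← mul_pow]
      gcongr
    rw [norm_smul, Real.norm_of_nonneg ht.le] at hsq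
    exact abs_le_of_sq_le_sq' (by linarith) (by positivity) |>.2

lemma exists_nonneg_eigenvector [OrderClosedTopology E]
    (hinner : ∀ x y : E, 0 ≤ x → 0 ≤ y → 0 ≤ ⟪x, y⟫) (hTc : IsCompactOperator T)
    (hT : ∀ x, 0 ≤ x → 0 ≤ T x) (ht : 0 < t) (hu : 0 ≤ u) (hu0 : u ≠ 0) (htu : t • u ≤ T u)
    (hgrowth : ∀ b > t, ∃ C, ∀ n, ‖(T ^ n) u‖ ≤ C * b ^ n) :
    ∃ r, 0 ≤ r ∧ r ≠ 0 ∧ T r = t • r := by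
  obtain ⟨r, hr, hr1, hTr⟩ :=
    exists_eigenvector_of_approx_eigenvector hTc isClosed_Ici ht.ne' fun δ hδ => by
      obtain ⟨x, hx, hx0, hTx⟩ :=
        exists_nonneg_norm_map_sub_smul_le hinner hT ht hu hu0 htu hgrowth hδ
      have hpos := norm_pos_iff.2 hx0
      refine ⟨‖x‖⁻¹ • x, smul_nonneg (by positivity) hx, norm_smul_inv_norm hx0, ?_⟩
      rw [map_smul, smul_comm t, ← smul_sub, norm_smul, norm_inv, norm_norm]
      exact (inv_mul_le_iff₀ hpos).2 (by rwa [mul_comm])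
  exact ⟨r, hr, norm_ne_zero_iff.1 (by simp [hr1]), hTr⟩

end KreinRutman

section HilbertSchmidt

open scoped InnerProductSpace ComplexConjugate

variable {𝕜 α β : Type*} [RCLike 𝕜] [MeasurableSpace α] [MeasurableSpace β] {μ : Measure α}
  {ν : Measure β}

lemma eLpNorm_integral_mul_le [SFinite ν] {F : α × β → 𝕜} {f : β → 𝕜}
    (hF : AEStronglyMeasurable F (μ.prod ν)) (hf : AEStronglyMeasurable f ν) :
    eLpNorm (fun x => ∫ y, F (x, y) * f y ∂ν) 2 μ ≤ eLpNorm F 2 (μ.prod ν) * eLpNorm f 2 ν := by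
  simp only [eLpNorm_eq_lintegral_rpow_enorm_toReal two_ne_zero ENNReal.ofNat_ne_top,
    ENNReal.toReal_ofNat]
  rw [← ENNReal.mul_rpow_of_nonneg _ _ (by norm_num),
    lintegral_prod _ (hF.enorm.pow_const _),
    ← lintegral_mul_const'' _ (hF.enorm.pow_const _).lintegral_prod_right']
  gcongr ?_ ^ _
  refine lintegral_mono_ae (hF.prodMk_left.mono fun x hx => ?_)
  calc ‖∫ y, F (x, y) * f y ∂ν‖ₑ ^ (2 : ℝ)
      ≤ (∫⁻ y, ‖F (x, y)‖ₑ * ‖f y‖ₑ ∂ν) ^ (2 : ℝ) := by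
        gcongr
        simpa only [enorm_mul] using enorm_integral_le_lintegral_enorm fun y => F (x, y) * f y
    _ ≤ ((∫⁻ y, ‖F (x, y)‖ₑ ^ (2 : ℝ) ∂ν) ^ (1 / (2 : ℝ)) *
          (∫⁻ y, ‖f y‖ₑ ^ (2 : ℝ) ∂ν) ^ (1 / (2 : ℝ))) ^ (2 : ℝ) := by
        gcongr
        exact ENNReal.lintegral_mul_le_Lp_mul_Lq ν .two_two hx.enorm hf.enorm
    _ = (∫⁻ y, ‖F (x, y)‖ₑ ^ (2 : ℝ) ∂ν) * ∫⁻ y, ‖f y‖ₑ ^ (2 : ℝ) ∂ν := by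
        rw [ENNReal.mul_rpow_of_nonneg _ _ (by norm_num), ← ENNReal.rpow_mul, ← ENNReal.rpow_mul]
        norm_num

lemma memLp_integral_mul [SFinite ν] {F : α × β → 𝕜} {f : β → 𝕜}
    (hF : MemLp F 2 (μ.prod ν)) (hf : MemLp f 2 ν) :
    MemLp (fun x => ∫ y, F (x, y) * f y ∂ν) 2 μ :=
  ⟨(hF.1.mul hf.1.comp_snd).integral_prod_right',
    (eLpNorm_integral_mul_le hF.1 hf.1).trans_lt (ENNReal.mul_lt_top hF.2 hf.2)⟩

lemma ae_memLp_prodMk_left [SFinite μ] [SFinite ν] {F : α × β → 𝕜}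
    (hF : MemLp F 2 (μ.prod ν)) : ∀ᵐ x ∂μ, MemLp (fun y => F (x, y)) 2 ν := by
  filter_upwards [hF.1.prodMk_left, ((memLp_two_iff_integrable_sq_norm hF.1).1 hF).prod_right_ae]
    with x hx hint
  exact (memLp_two_iff_integrable_sq_norm hx).2 hint

lemma ae_integrable_prodMk_left_mul [SFinite μ] [SFinite ν] {F : α × β → 𝕜} {f : β → 𝕜}
    (hF : MemLp F 2 (μ.prod ν)) (hf : MemLp f 2 ν) :
    ∀ᵐ x ∂μ, Integrable (fun y => F (x, y) * f y) ν :=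
  (ae_memLp_prodMk_left hF).mono fun _ hx => hx.integrable_mul hf

lemma integral_prodMk_left_mul_congr_ae [SFinite ν] {F G : α × β → 𝕜} {f g : β → 𝕜}
    (hFG : F =ᵐ[μ.prod ν] G) (hfg : f =ᵐ[ν] g) :
    (fun x => ∫ y, F (x, y) * f y ∂ν) =ᵐ[μ] fun x => ∫ y, G (x, y) * g y ∂ν := by
  filter_upwards [Measure.ae_ae_of_ae_prod hFG] with x hx
  exact integral_congr_ae (by filter_upwards [hx, hfg] with y hy hfgy using by rw [hy, hfgy])

variable (μ ν) in
/-- The Hilbert–Schmidt operator `f ↦ ∫ y, F (x, y) * f y` of a square-integrable kernel `F`, as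
a continuous bilinear map of kernel and function. -/
noncomputable def hilbertSchmidt [SFinite μ] [SFinite ν] :
    Lp 𝕜 2 (μ.prod ν) →L[𝕜] Lp 𝕜 2 ν →L[𝕜] Lp 𝕜 2 μ :=
  LinearMap.mkContinuous₂
    (LinearMap.mk₂ 𝕜
      (fun F f => (memLp_integral_mul (Lp.memLp F) (Lp.memLp f)).toLp)
      (fun F G f => by
        rw [← MemLp.toLp_add, MemLp.toLp_eq_toLp_iff]
        filter_upwards [integral_prodMk_left_mul_congr_ae (Lp.coeFn_add F G) (.refl _ f),
          ae_integrable_prodMk_left_mul (Lp.memLp F) (Lp.memLp f),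
          ae_integrable_prodMk_left_mul (Lp.memLp G) (Lp.memLp f)] with x hx hF hG
        simp only [hx, Pi.add_apply, add_mul, integral_add hF hG])
      (fun c F f => by
        rw [← MemLp.toLp_const_smul, MemLp.toLp_eq_toLp_iff]
        filter_upwards [integral_prodMk_left_mul_congr_ae (Lp.coeFn_smul c F) (.refl _ f)] with x hx
        simp only [hx, Pi.smul_apply, smul_mul_assoc, integral_smul])
      (fun F f g => by
        rw [← MemLp.toLp_add, MemLp.toLp_eq_toLp_iff]
        filter_upwards [integral_prodMk_left_mul_congr_ae (.refl _ F) (Lp.coeFn_add f g),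
          ae_integrable_prodMk_left_mul (Lp.memLp F) (Lp.memLp f),
          ae_integrable_prodMk_left_mul (Lp.memLp F) (Lp.memLp g)] with x hx hf hg
        simp only [hx, Pi.add_apply, mul_add, integral_add hf hg])
      (fun c F f => by
        rw [← MemLp.toLp_const_smul, MemLp.toLp_eq_toLp_iff]
        filter_upwards [integral_prodMk_left_mul_congr_ae (.refl _ F) (Lp.coeFn_smul c f)] with x hx
        simp only [hx, Pi.smul_apply, mul_smul_comm, integral_smul]))
    1 fun F f => by
      rw [one_mul, LinearMap.mk₂_apply, Lp.norm_toLp, Lp.norm_def, Lp.norm_def,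
        ← ENNReal.toReal_mul]
      exact ENNReal.toReal_mono (ENNReal.mul_ne_top (Lp.eLpNorm_ne_top F) (Lp.eLpNorm_ne_top f))
        (eLpNorm_integral_mul_le (Lp.aestronglyMeasurable F) (Lp.aestronglyMeasurable f))

lemma hilbertSchmidt_toLp [SFinite μ] [SFinite ν] {F : α × β → 𝕜} {f : β → 𝕜}
    (hF : MemLp F 2 (μ.prod ν)) (hf : MemLp f 2 ν) :
    hilbertSchmidt μ ν hF.toLp hf.toLp = (memLp_integral_mul hF hf).toLp :=
  MemLp.toLp_congr (memLp_integral_mul (Lp.memLp _) (Lp.memLp _)) _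
    (integral_prodMk_left_mul_congr_ae hF.coeFn_toLp hf.coeFn_toLp)

lemma memLp_two_prod_mul {g : α → 𝕜} {f : β → 𝕜} (hg : MemLp g 2 μ)
    (hf : MemLp f 2 ν) : MemLp (fun p : α × β => g p.1 * f p.2) 2 (μ.prod ν) := by
  refine (memLp_two_iff_integrable_sq_norm (hg.1.comp_fst.mul hf.1.comp_snd)).2 ?_
  simp only [Pi.mul_apply, norm_mul, mul_pow]
  exact ((memLp_two_iff_integrable_sq_norm hg.1).1 hg).mul_prod
    ((memLp_two_iff_integrable_sq_norm hf.1).1 hf)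

/-- The square-integrable kernel `(x, y) ↦ g x * conj (f y)` of the rank-one operator
`h ↦ ⟪f, h⟫ • g`. -/
noncomputable def rankOneKernel (g : Lp 𝕜 2 μ) (f : Lp 𝕜 2 ν) :
    Lp 𝕜 2 (μ.prod ν) :=
  (memLp_two_prod_mul (Lp.memLp g) (Lp.memLp f).star).toLp

lemma hilbertSchmidt_rankOneKernel [SFinite μ] [SFinite ν] (g : Lp 𝕜 2 μ) (f : Lp 𝕜 2 ν) :
    hilbertSchmidt μ ν (rankOneKernel g f) = InnerProductSpace.rankOne 𝕜 g f := by
  ext1 h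
  have hh : h = (Lp.memLp h).toLp := by simp
  rw [InnerProductSpace.rankOne_apply, hh, rankOneKernel, hilbertSchmidt_toLp, ← hh]
  apply Lp.ext
  filter_upwards [MemLp.coeFn_toLp (memLp_integral_mul
    (memLp_two_prod_mul (Lp.memLp g) (Lp.memLp f).star) (Lp.memLp h)),
    Lp.coeFn_smul ⟪f, h⟫_𝕜 g] with x hx hsmul
  rw [hx, hsmul, Pi.smul_apply, L2.inner_def, smul_eq_mul, mul_comm, ← integral_const_mul]
  simp only [Pi.star_apply, RCLike.star_def, RCLike.inner_apply, mul_assoc, mul_comm (h _)]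

lemma inner_rankOneKernel [SFinite μ] [SFinite ν] (g : Lp 𝕜 2 μ) (f : Lp 𝕜 2 ν)
    (F : Lp 𝕜 2 (μ.prod ν)) : ⟪rankOneKernel g f, F⟫_𝕜 = ⟪g, hilbertSchmidt μ ν F f⟫_𝕜 := by
  have hint := L2.integrable_inner (𝕜 := 𝕜) (rankOneKernel g f) F
  have hker : ∀ᵐ p ∂μ.prod ν, ⟪rankOneKernel g f p, F p⟫_𝕜 = conj (g p.1) * (F p * f p.2) := by
    filter_upwards [MemLp.coeFn_toLp (memLp_two_prod_mul (Lp.memLp g) (Lp.memLp f).star)] with p hp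
    rw [rankOneKernel, hp]
    simp only [Pi.star_apply, RCLike.star_def, RCLike.inner_apply, map_mul, RCLike.conj_conj]
    ring
  rw [L2.inner_def, L2.inner_def, integral_congr_ae hker, integral_prod _ (hint.congr hker)]
  refine integral_congr_ae ?_
  filter_upwards [MemLp.coeFn_toLp (memLp_integral_mul (Lp.memLp F) (Lp.memLp f))] with x hx
  rw [integral_const_mul, RCLike.inner_apply, mul_comm]
  exact congrArg (· * _) hx.symm

/- A kernel orthogonal to every rank-one kernel induces the zero operator, which is compact; so no
kernel is orthogonal to the closed subspace of kernels inducing a compact operator. -/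
lemma isCompactOperator_hilbertSchmidt [SFinite μ] [SFinite ν] (F : Lp 𝕜 2 (μ.prod ν)) :
    IsCompactOperator (hilbertSchmidt μ ν F) := by
  let P : Submodule 𝕜 (Lp 𝕜 2 (μ.prod ν)) :=
    (compactOperator (RingHom.id 𝕜) (Lp 𝕜 2 ν) (Lp 𝕜 2 μ)).comap
      (hilbertSchmidt μ ν).toLinearMap
  have hP : ∀ {G}, G ∈ P ↔ IsCompactOperator (hilbertSchmidt μ ν G) := Iff.rfl
  have hclosed : IsClosed (P : Set (Lp 𝕜 2 (μ.prod ν))) :=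
    (isClosed_setOfPred_isCompactOperator (σ₁₂ := RingHom.id 𝕜)).preimage
      (hilbertSchmidt μ ν).continuous
  have : CompleteSpace P := hclosed.completeSpace_coe
  have hrank : ∀ g f, rankOneKernel g f ∈ P := fun g f => by
    rw [hP, hilbertSchmidt_rankOneKernel, InnerProductSpace.rankOne_def']
    exact (isCompactOperator_of_locallyCompactSpace_dom (innerSL 𝕜 f)).clm_comp
      (.toSpanSingleton 𝕜 g : 𝕜 →L[𝕜] Lp 𝕜 2 μ)
  have htop : P = ⊤ := by
    rw [← Submodule.orthogonal_eq_bot_iff, Submodule.eq_bot_iff]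
    intro G hG
    have hzero : hilbertSchmidt μ ν G = 0 := by
      ext1 f
      refine ext_inner_left 𝕜 fun g => ?_
      rw [← inner_rankOneKernel, hG _ (hrank g f), zero_apply, inner_zero_right]
    have hGP : G ∈ P := hP.2 (hzero ▸ isCompactOperator_zero)
    exact inner_self_eq_zero.1 (hG G hGP)
  exact hP.1 (htop ▸ Submodule.mem_top)

end HilbertSchmidt

section BoundedKernel

variable {μ : Measure Ω} {K : Ω → Ω → ℝ} {E : Type*} [NormedAddCommGroup E] [NormedSpace ℝ E]

/-- A bounded measurable real kernel. The class contains the digraphons and, unlike them, is closed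
under deflation. -/
structure IsBoundedKernel (K : Ω → Ω → ℝ) : Prop where
  measurable : Measurable (Function.uncurry K)
  exists_bound : ∃ M, 0 ≤ M ∧ ∀ x y, |K x y| ≤ M

lemma IsDigraphon.isBoundedKernel {W : Ω → Ω → ℝ} (hW : IsDigraphon W) : IsBoundedKernel W :=
  ⟨hW.1, 1, zero_le_one, fun x y => abs_le.2 ⟨by linarith [(hW.2 x y).1], (hW.2 x y).2⟩⟩

namespace IsBoundedKernel

lemma swap (hK : IsBoundedKernel K) : IsBoundedKernel (Function.swap K) :=
  ⟨hK.measurable.comp measurable_swap, hK.exists_bound.imp fun _ h => ⟨h.1, fun x y => h.2 y x⟩⟩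

lemma measurable_left (hK : IsBoundedKernel K) (x : Ω) : Measurable (K x) :=
  hK.measurable.comp measurable_prodMk_left

lemma memLp (hK : IsBoundedKernel K) [IsFiniteMeasure μ] (p : ℝ≥0∞) (x : Ω) : MemLp (K x) p μ :=
  let ⟨M, _, hM⟩ := hK.exists_bound
  .of_bound (hK.measurable_left x).aestronglyMeasurable M (.of_forall (hM x))

lemma integrable_smul (hK : IsBoundedKernel K) {f : Ω → E} (hf : Integrable f μ) (x : Ω) :
    Integrable (fun y => K x y • f y) μ :=
  let ⟨M, _, hM⟩ := hK.exists_bound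
  hf.bdd_smul M (hK.measurable_left x).aestronglyMeasurable (.of_forall (hM x))

lemma integrable_prod_smul (hK : IsBoundedKernel K) {f : Ω × Ω → E}
    (hf : Integrable f (μ.prod μ)) :
    Integrable (fun p : Ω × Ω => K p.1 p.2 • f p) (μ.prod μ) :=
  let ⟨M, _, hM⟩ := hK.exists_bound
  hf.bdd_smul M hK.measurable.aestronglyMeasurable (.of_forall fun p => hM p.1 p.2)

end IsBoundedKernel

/-- The left action `f ↦ f K` of a kernel on functions; the right action of `K` is the left
action of `Function.swap K`. -/
noncomputable def leftAct (μ : Measure Ω) (K : Ω → Ω → ℝ) (f : Ω → E) (x : Ω) : E :=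
  ∫ y, K y x • f y ∂μ

lemma leftAct_congr {f g : Ω → E} (h : f =ᵐ[μ] g) : leftAct μ K f = leftAct μ K g :=
  funext fun x => integral_congr_ae (h.mono fun y hy => congrArg (K y x • ·) hy)

lemma leftAct_sub (hK : IsBoundedKernel K) {f g : Ω → E} (hf : Integrable f μ)
    (hg : Integrable g μ) : leftAct μ K (f - g) = leftAct μ K f - leftAct μ K g :=
  funext fun x => by
    simp only [leftAct, Pi.sub_apply, smul_sub]
    exact integral_sub (hK.swap.integrable_smul hf x) (hK.swap.integrable_smul hg x)

lemma leftAct_const_smul {𝕜 : Type*} [RCLike 𝕜] [NormedSpace 𝕜 E] (c : 𝕜) (f : Ω → E) :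
    leftAct μ K (c • f) = c • leftAct μ K f :=
  funext fun x => by simp only [leftAct, Pi.smul_apply, smul_comm _ c, integral_smul]

lemma leftAct_ofReal (f : Ω → ℝ) :
    leftAct μ K (Complex.ofReal ∘ f) = Complex.ofReal ∘ leftAct μ K f :=
  funext fun x => by
    simp only [leftAct, Function.comp_apply, Complex.real_smul, smul_eq_mul, ← Complex.ofReal_mul,
      integral_complex_ofReal]

lemma leftAct_nonneg (hK : ∀ x y, 0 ≤ K x y) {f : Ω → ℝ} (hf : 0 ≤ᵐ[μ] f) (x : Ω) :
    0 ≤ leftAct μ K f x :=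
  integral_nonneg_of_ae <| hf.mono fun y hy => mul_nonneg (hK y x) hy

lemma norm_leftAct_le (hK : ∀ x y, 0 ≤ K x y) (f : Ω → E) (x : Ω) :
    ‖leftAct μ K f x‖ ≤ leftAct μ K (fun y => ‖f y‖) x :=
  (norm_integral_le_integral_norm _).trans_eq <| by
    simp only [leftAct, norm_smul, Real.norm_of_nonneg (hK _ _), smul_eq_mul]

lemma norm_leftAct_le_of_bound {M : ℝ} (hM : ∀ x y, |K x y| ≤ M) {f : Ω → E}
    (hf : Integrable f μ) (x : Ω) : ‖leftAct μ K f x‖ ≤ M * ∫ y, ‖f y‖ ∂μ := by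
  rw [← integral_const_mul]
  refine norm_integral_le_of_norm_le (hf.norm.const_mul M) (.of_forall fun y => ?_)
  rw [norm_smul]
  exact mul_le_mul_of_nonneg_right (hM y x) (norm_nonneg _)

lemma IsBoundedKernel.stronglyMeasurable_leftAct [SFinite μ] (hK : IsBoundedKernel K) {f : Ω → E}
    (hf : AEStronglyMeasurable f μ) : StronglyMeasurable (leftAct μ K f) := by
  rw [leftAct_congr hf.ae_eq_mk]
  have : StronglyMeasurable fun p : Ω × Ω => K p.2 p.1 • hf.mk f p.2 :=
    hK.swap.measurable.stronglyMeasurable.smul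
      (hf.stronglyMeasurable_mk.comp_measurable measurable_snd)
  exact this.integral_prod_right

lemma IsBoundedKernel.memLp_leftAct [IsFiniteMeasure μ] (hK : IsBoundedKernel K) {f : Ω → E}
    (hf : Integrable f μ) (p : ℝ≥0∞) : MemLp (leftAct μ K f) p μ :=
  let ⟨_, _, hM⟩ := hK.exists_bound
  .of_bound (hK.stronglyMeasurable_leftAct hf.1).aestronglyMeasurable _
    (.of_forall (norm_leftAct_le_of_bound hM hf))

lemma IsBoundedKernel.memLp_leftAct_iterate [IsFiniteMeasure μ] (hK : IsBoundedKernel K)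
    {f : Ω → E} (hf : MemLp f 2 μ) (n : ℕ) : MemLp ((leftAct μ K)^[n] f) 2 μ := by
  induction n with
  | zero => exact hf
  | succ n ih =>
    rw [Function.iterate_succ_apply']
    exact hK.memLp_leftAct (ih.integrable one_le_two) 2

lemma integral_smul_leftAct [CompleteSpace E] [SFinite μ] (hK : IsBoundedKernel K) {f : Ω → E}
    {g : Ω → ℝ} (hf : Integrable f μ) (hg : Integrable g μ) :
    ∫ x, g x • leftAct μ K f x ∂μ = ∫ y, leftAct μ (Function.swap K) g y • f y ∂μ := by
  have hint : Integrable (Function.uncurry fun x y => g x • K y x • f y) (μ.prod μ) :=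
    (hK.swap.integrable_prod_smul (hg.smul_prod hf)).congr
      (.of_forall fun p => smul_comm (K p.2 p.1) (g p.1) (f p.2))
  calc ∫ x, g x • leftAct μ K f x ∂μ
      = ∫ x, ∫ y, g x • K y x • f y ∂μ ∂μ := by simp only [leftAct, integral_smul]
    _ = ∫ y, ∫ x, g x • K y x • f y ∂μ ∂μ := integral_integral_swap hint
    _ = ∫ y, leftAct μ (Function.swap K) g y • f y ∂μ := by
      simp only [leftAct, Function.swap, smul_smul, mul_comm (g _), smul_eq_mul,
        integral_smul_const]

end BoundedKernel

section LeftOp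

variable {μ : Measure Ω} [IsFiniteMeasure μ] {K : Ω → Ω → ℝ} {𝕜 : Type*} [RCLike 𝕜]

lemma IsBoundedKernel.memLp_ofReal_prod (hK : IsBoundedKernel K) :
    MemLp (fun p : Ω × Ω => (K p.2 p.1 : 𝕜)) 2 (μ.prod μ) :=
  let ⟨M, _, hM⟩ := hK.exists_bound
  .of_bound (RCLike.measurable_ofReal.comp hK.swap.measurable).aestronglyMeasurable M
    (.of_forall fun p => by simpa using hM p.2 p.1)

variable (μ 𝕜) in
/-- The operator `leftAct μ K` on the Hilbert space of square-integrable functions. -/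
noncomputable def leftOp (hK : IsBoundedKernel K) : Lp 𝕜 2 μ →L[𝕜] Lp 𝕜 2 μ :=
  hilbertSchmidt μ μ hK.memLp_ofReal_prod.toLp

lemma isCompactOperator_leftOp (hK : IsBoundedKernel K) : IsCompactOperator (leftOp μ 𝕜 hK) :=
  isCompactOperator_hilbertSchmidt _

lemma leftOp_toLp (hK : IsBoundedKernel K) {f : Ω → 𝕜} (hf : MemLp f 2 μ) :
    leftOp μ 𝕜 hK hf.toLp = (hK.memLp_leftAct (hf.integrable one_le_two) 2).toLp :=
  (hilbertSchmidt_toLp hK.memLp_ofReal_prod hf).trans <|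
    MemLp.toLp_congr _ (hK.memLp_leftAct (hf.integrable one_le_two) 2) <| .of_forall fun x => by
      simp only [leftAct, RCLike.real_smul_eq_coe_mul]

lemma leftOp_pow_toLp (hK : IsBoundedKernel K) {f : Ω → 𝕜} (hf : MemLp f 2 μ) (n : ℕ) :
    (leftOp μ 𝕜 hK ^ n) hf.toLp = (hK.memLp_leftAct_iterate hf n).toLp := by
  induction n with
  | zero => rfl
  | succ n ih =>
    rw [pow_succ', mul_apply_eq_comp, ih, leftOp_toLp]
    simp only [Function.iterate_succ_apply']

lemma norm_leftOp_pow_toLp_ofReal (hK : IsBoundedKernel K) {f : Ω → ℝ} (hf : MemLp f 2 μ) (n : ℕ) :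
    ‖(leftOp μ ℂ hK ^ n) (MemLp.ofReal (K := ℂ) hf).toLp‖ = ‖(leftOp μ ℝ hK ^ n) hf.toLp‖ := by
  have hcomm : Function.Semiconj (Complex.ofReal ∘ ·) (leftAct μ K : (Ω → ℝ) → Ω → ℝ)
      (leftAct μ K) := fun f => (leftAct_ofReal f).symm
  rw [leftOp_pow_toLp, leftOp_pow_toLp, Lp.norm_toLp, Lp.norm_toLp]
  exact congrArg ENNReal.toReal (eLpNorm_congr_norm_ae (.of_forall fun x => by
    rw [← Complex.norm_real, ← Complex.ofRealCLM_apply]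
    exact congrArg (‖· x‖) (hcomm.iterate_right n f).symm))

end LeftOp

section KernelPower

variable {μ : Measure Ω} {K : Ω → Ω → ℝ}

lemma isBoundedKernel_kpowAux [IsFiniteMeasure μ] (hK : IsBoundedKernel K) (n : ℕ) :
    IsBoundedKernel (kpowAux μ K n) := by
  induction n with
  | zero => exact hK
  | succ n ih =>
    obtain ⟨M, hM0, hM⟩ := hK.exists_bound
    obtain ⟨N, hN0, hN⟩ := ih.exists_bound
    refine ⟨?_, M * N * μ.real univ, by positivity, fun x y => ?_⟩
    · have : Measurable fun q : (Ω × Ω) × Ω => K q.1.1 q.2 * kpowAux μ K n q.2 q.1.2 :=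
        (hK.measurable.comp (by fun_prop : Measurable fun q : (Ω × Ω) × Ω => (q.1.1, q.2))).mul
          (ih.measurable.comp (by fun_prop : Measurable fun q : (Ω × Ω) × Ω => (q.2, q.1.2)))
      exact this.stronglyMeasurable.integral_prod_right.measurable
    · refine norm_integral_le_of_norm_le_const (f := fun z => K x z * kpowAux μ K n z y)
        (.of_forall fun z => ?_)
      rw [norm_mul]
      exact mul_le_mul (hM x z) (hN z y) (norm_nonneg _) hM0

lemma kpowAux_succ_right [IsFiniteMeasure μ] (hK : IsBoundedKernel K) (n : ℕ) (x : Ω) :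
    kpowAux μ K (n + 1) x = leftAct μ K (kpowAux μ K n x) := by
  funext y
  induction n generalizing x with
  | zero => simp only [kpowAux, leftAct, smul_eq_mul, mul_comm]
  | succ n ih =>
    calc kpowAux μ K (n + 2) x y
        = ∫ z, K x z • leftAct μ K (kpowAux μ K n z) y ∂μ := by
          simp only [← ih, smul_eq_mul, kpowAux]
      _ = ∫ z, ∫ w, K x z * (K w y * kpowAux μ K n z w) ∂μ ∂μ := by
          simp only [leftAct, smul_eq_mul, integral_const_mul]
      _ = ∫ w, ∫ z, K x z * (K w y * kpowAux μ K n z w) ∂μ ∂μ := by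
          refine integral_integral_swap ?_
          refine ((isBoundedKernel_kpowAux (μ := μ) hK n).integrable_prod_smul
            ((hK.memLp 1 x).integrable le_rfl |>.smul_prod
              ((hK.swap.memLp 1 y).integrable le_rfl))).congr (.of_forall fun p => ?_)
          simp only [Function.swap, Function.uncurry, smul_eq_mul]
          ring
      _ = leftAct μ K (kpowAux μ K (n + 1) x) y := by
          simp only [leftAct, smul_eq_mul, kpowAux, ← integral_const_mul, mul_left_comm]

lemma kpowAux_eq_iterate [IsFiniteMeasure μ] (hK : IsBoundedKernel K) (n : ℕ) (x : Ω) :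
    kpowAux μ K n x = (leftAct μ K)^[n] (K x) := by
  induction n with
  | zero => rfl
  | succ n ih => rw [kpowAux_succ_right hK, ih, Function.iterate_succ_apply']

end KernelPower

section Irreducible

variable {μ : Measure Ω} {K : Ω → Ω → ℝ}

/-- Strong connectedness in almost everywhere form: up to null sets, no set other than `∅` and `Ω`
is closed under following the edges of `K`. -/
def IsIrreducible (μ : Measure Ω) (K : Ω → Ω → ℝ) : Prop :=
  ∀ A : Set Ω, MeasurableSet A →
    (∀ᵐ p ∂μ.prod μ, p.1 ∈ A → p.2 ∉ A → K p.1 p.2 = 0) → μ A = 0 ∨ μ Aᶜ = 0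

lemma StronglyConnectedIn.isIrreducible [SFinite μ] (hK : StronglyConnectedIn μ K univ) :
    IsIrreducible μ K := by
  intro A hA hclosed
  by_contra! hA0
  refine (hK.2.2 A Aᶜ hA hA.compl (union_compl_self A) disjoint_compl_right
    (pos_iff_ne_zero.2 hA0.1) (pos_iff_ne_zero.2 hA0.2)).ne' (integral_eq_zero_of_ae ?_)
  rw [EventuallyEq, ae_restrict_iff' hA]
  filter_upwards [Measure.ae_ae_of_ae_prod hclosed] with x hx hxA
  refine integral_eq_zero_of_ae ?_
  rw [EventuallyEq, ae_restrict_iff' hA.compl]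
  exact hx.mono fun y hy => hy hxA

lemma IsIrreducible.swap [SFinite μ] (hI : IsIrreducible μ K) :
    IsIrreducible μ (Function.swap K) := by
  intro A hA hclosed
  have hclosed' := (Measure.measurePreserving_swap (μ := μ) (ν := μ)).quasiMeasurePreserving.ae
    hclosed
  have := hI Aᶜ hA.compl <| hclosed'.mono fun p hp h₁ h₂ => hp (not_not.1 h₂) h₁
  rwa [compl_compl, or_comm] at this

lemma IsIrreducible.ae_pos_of_leftAct_le [SFinite μ] (hI : IsIrreducible μ K)
    (hK : IsBoundedKernel K) (hK0 : ∀ x y, 0 ≤ K x y) {t : ℝ} {h : Ω → ℝ} (hh : Integrable h μ)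
    (h0 : 0 ≤ᵐ[μ] h) (hne : ¬ h =ᵐ[μ] 0) (hle : leftAct μ K h ≤ᵐ[μ] t • h) :
    ∀ᵐ x ∂μ, 0 < h x := by
  obtain ⟨g, hg, hhg⟩ := hh.1.aemeasurable
  have hA : MeasurableSet {x | g x = 0} := hg (measurableSet_singleton 0)
  have hclosed : ∀ᵐ p ∂μ.prod μ, g p.1 = 0 → g p.2 ≠ 0 → Function.swap K p.1 p.2 = 0 := by
    rw [Measure.ae_prod_iff_ae_ae (p := fun p => g p.1 = 0 → g p.2 ≠ 0 → K p.2 p.1 = 0) <|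
      (hA.preimage measurable_fst).imp <| (hA.preimage measurable_snd).compl.imp <|
        hK.swap.measurable (measurableSet_singleton 0)]
    filter_upwards [hle, hhg] with x hx hxg
    refine eventually_imp_distrib_left.2 fun hgx => ?_
    have hnn : 0 ≤ᵐ[μ] fun y => K y x • h y := h0.mono fun y hy => mul_nonneg (hK0 y x) hy
    have hzero : leftAct μ K h x = 0 := by
      refine le_antisymm (hx.trans_eq ?_) (leftAct_nonneg hK0 h0 x)
      rw [Pi.smul_apply, hxg, hgx, smul_zero]
    filter_upwards [(integral_eq_zero_iff_of_nonneg_ae hnn (hK.swap.integrable_smul hh x)).1 hzero,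
      hhg] with y hy hyg hgy
    exact (smul_eq_zero.1 hy).resolve_right (hyg ▸ hgy)
  rcases hI.swap _ hA hclosed with hnull | hconull
  · filter_upwards [measure_eq_zero_iff_ae_notMem.1 hnull, h0, hhg] with x hx hx0 hxg
    exact hx0.lt_of_ne fun h => hx (hxg ▸ h.symm)
  · refine (hne ?_).elim
    filter_upwards [measure_eq_zero_iff_ae_notMem.1 hconull, hhg] with x hx hxg
    exact hxg.trans (not_not.1 hx)

lemma IsIrreducible.ae_eq_const {β : Type*} [MeasurableSpace β] [Nonempty β]
    [MeasurableSpace.CountablySeparated β] (hI : IsIrreducible μ K) {φ : Ω → β}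
    (hφ : Measurable φ) (hinv : ∀ᵐ p ∂μ.prod μ, K p.1 p.2 ≠ 0 → φ p.2 = φ p.1) :
    ∃ c, φ =ᵐ[μ] fun _ => c := by
  refine exists_eventuallyEq_const_of_forall_separating MeasurableSet fun U hU => ?_
  have hclosed : ∀ᵐ p ∂μ.prod μ, p.1 ∈ φ ⁻¹' U → p.2 ∉ φ ⁻¹' U → K p.1 p.2 = 0 :=
    hinv.mono fun p hp h₁ => not_imp_comm.1 fun h => mem_preimage.2 ((hp h).symm ▸ h₁)
  refine (hI _ (hφ hU) hclosed).symm.imp (fun h => ?_) fun h => measure_eq_zero_iff_ae_notMem.1 h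
  exact (measure_eq_zero_iff_ae_notMem.1 h).mono fun x => not_not.1

end Irreducible

section Periodicity

variable {μ : Measure Ω} {K : Ω → Ω → ℝ} {d : ℕ}

lemma graphPeriodic_of_label {q : Ω → ZMod d} (hq : ∀ j, MeasurableSet (q ⁻¹' {j}))
    (hstep : ∀ᵐ p ∂μ.prod μ, K p.1 p.2 ≠ 0 → q p.2 = q p.1 + 1) : GraphPeriodic μ K d := by
  refine ⟨fun j => q ⁻¹' {j}, hq, fun i j hij => ?_, ?_, fun j => ?_⟩
  · exact (disjoint_singleton.2 hij).preimage q
  · rw [← preimage_iUnion, iUnion_of_singleton, preimage_univ]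
  · refine measure_eq_zero_iff_ae_notMem.2 (hstep.mono ?_)
    rintro p hp ⟨rfl, hp₂, hne⟩
    exact hp₂ (hp hne)

lemma measurable_invFun {α β : Type*} [Countable α] [Nonempty α] [MeasurableSpace α]
    [MeasurableSpace β] [MeasurableSingletonClass β] (e : α → β) :
    Measurable (Function.invFun e) := by
  refine measurable_const.measurable_of_countable_ne (f := fun _ => Classical.arbitrary α) ?_
  exact (countable_range e).mono fun b hb => by_contra fun hbe => hb (Function.invFun_neg hbe).symm

lemma zmodChar_orderOf_injective {R : Type*} [CommMonoid R] (k : R) [NeZero (orderOf k)] :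
    Function.Injective (AddChar.zmodChar (orderOf k) (pow_orderOf_eq_one k)) := fun i j hij =>
  ZMod.val_injective _ <| pow_injOn_Iio_orderOf (ZMod.val_lt i) (ZMod.val_lt j) <| by
    simpa only [AddChar.zmodChar_apply] using hij

lemma exists_mul_zmodChar_eq {F : Type*} [Field F] {k a b : F} [NeZero (orderOf k)] (ha : a ≠ 0)
    (hab : b ^ orderOf k = a ^ orderOf k) :
    ∃ j, a * AddChar.zmodChar (orderOf k) (pow_orderOf_eq_one k) j = b := by
  have hroot : (b / a) ^ orderOf k = 1 := by rw [div_pow, hab, div_self (pow_ne_zero _ ha)]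
  obtain ⟨i, -, hi⟩ := (IsPrimitiveRoot.orderOf k).eq_pow_of_pow_eq_one hroot
  exact ⟨i, by rw [AddChar.zmodChar_apply', hi, mul_div_cancel₀ _ ha]⟩

/-- On almost all of `Ω` the function `φ` takes values in a single orbit of the group generated by
`k`, and the position within that orbit is a periodic labelling. -/
lemma Aperiodic.eq_one_of_edge_mul {F : Type*} [Field F] [MeasurableSpace F] [MeasurableMul₂ F]
    [MeasurableSpace.CountablySeparated F] [MeasurableSingletonClass F] [NeZero μ]
    (hap : Aperiodic μ K) (hI : IsIrreducible μ K) {k : F} (hk : IsOfFinOrder k) {φ : Ω → F}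
    (hφ : Measurable φ) (hφ0 : ∀ᵐ x ∂μ, φ x ≠ 0)
    (hedge : ∀ᵐ p ∂μ.prod μ, K p.1 p.2 ≠ 0 → φ p.2 = φ p.1 * k) : k = 1 := by
  have : NeZero (orderOf k) := ⟨hk.orderOf_pos.ne'⟩
  let χ := AddChar.zmodChar (orderOf k) (pow_orderOf_eq_one k)
  obtain ⟨c, hc⟩ := hI.ae_eq_const (hφ.pow_const (orderOf k)) <| hedge.mono fun p hp hne => by
    rw [hp hne, mul_pow, pow_orderOf_eq_one, mul_one]
  obtain ⟨x₀, hx₀, hx₀0⟩ := (hc.and hφ0).exists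
  let e : ZMod (orderOf k) → F := fun j => φ x₀ * χ j
  have he : Function.Injective e :=
    (mul_right_injective₀ hx₀0).comp (zmodChar_orderOf_injective k)
  have hmem : ∀ᵐ x ∂μ, ∃ j, e j = φ x :=
    hc.mono fun x hx => exists_mul_zmodChar_eq hx₀0 (hx.trans hx₀.symm)
  let _ : MeasurableSpace (ZMod (orderOf k)) := ⊤
  have hlabel : Measurable (Function.invFun e ∘ φ) := (measurable_invFun e).comp hφ
  refine orderOf_eq_one_iff.1 (hap _ hk.orderOf_pos <|
    graphPeriodic_of_label (fun j => hlabel trivial) ?_)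
  filter_upwards [hedge, Measure.quasiMeasurePreserving_fst.ae hmem] with p hp ⟨j, hj⟩ hne
  have hj' : φ p.2 = e (j + 1) := by
    have hχ : χ 1 = k := by simpa using AddChar.zmodChar_apply' (pow_orderOf_eq_one k) 1
    simp only [e, hp hne, ← hj, AddChar.map_add_eq_mul, hχ, mul_assoc]
  rw [Function.comp_apply, Function.comp_apply, hj', ← hj, Function.leftInverse_invFun he,
    Function.leftInverse_invFun he]

end Periodicity

section Eigenfunction

variable {μ : Measure Ω} {K : Ω → Ω → ℝ}

/-- `f` lies in the eigenspace of the left action of `K` on `L²` for the value `c`. Unlike in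
`IsEigenvalue`, the function `f` may vanish. A right eigenfunction of `K` is a left eigenfunction
of `Function.swap K`. -/
structure IsLeftEigen {𝕜 : Type*} [RCLike 𝕜] (μ : Measure Ω) (K : Ω → Ω → ℝ) (c : 𝕜) (f : Ω → 𝕜) :
    Prop where
  memLp : MemLp f 2 μ
  leftAct_eq : leftAct μ K f =ᵐ[μ] c • f

namespace IsLeftEigen

variable {𝕜 : Type*} [RCLike 𝕜] {c : 𝕜} {f : Ω → 𝕜}

lemma integrable [IsFiniteMeasure μ] (hf : IsLeftEigen μ K c f) : Integrable f μ :=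
  hf.memLp.integrable one_le_two

lemma congr {g : Ω → 𝕜} (hf : IsLeftEigen μ K c f) (hfg : f =ᵐ[μ] g) : IsLeftEigen μ K c g :=
  ⟨hf.memLp.ae_eq hfg, leftAct_congr hfg ▸ hf.leftAct_eq.trans (hfg.const_smul c)⟩

lemma ofReal {c : ℝ} {f : Ω → ℝ} (hf : IsLeftEigen μ K c f) :
    IsLeftEigen μ K (c : ℂ) (Complex.ofReal ∘ f) :=
  ⟨hf.memLp.ofReal, by
    rw [leftAct_ofReal]
    exact hf.leftAct_eq.mono fun x hx => by simp [hx]⟩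

lemma norm_smul_le_leftAct_norm (hK0 : ∀ x y, 0 ≤ K x y) (hf : IsLeftEigen μ K c f) :
    (‖c‖ • fun x => ‖f x‖) ≤ᵐ[μ] leftAct μ K fun x => ‖f x‖ := by
  filter_upwards [hf.leftAct_eq] with x hx
  rw [Pi.smul_apply, smul_eq_mul, ← norm_smul, ← Pi.smul_apply, ← hx]
  exact norm_leftAct_le hK0 f x

lemma integral_smul_leftAct [IsFiniteMeasure μ] {E : Type*} [NormedAddCommGroup E]
    [NormedSpace ℝ E] [CompleteSpace E] (hK : IsBoundedKernel K) {t : ℝ} {r : Ω → ℝ}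
    (hr : IsLeftEigen μ (Function.swap K) t r) {f : Ω → E} (hf : Integrable f μ) :
    ∫ x, r x • leftAct μ K f x ∂μ = t • ∫ x, r x • f x ∂μ := by
  rw [Digraphon.integral_smul_leftAct hK hf hr.integrable, ← integral_smul]
  exact integral_congr_ae <| hr.leftAct_eq.mono fun x hx => by
    simp only [hx, Pi.smul_apply, smul_assoc]

/-- Against a positive eigenfunction of the transposed kernel, the nonnegative function
`leftAct μ K a - t • a` integrates to zero. -/
lemma of_smul_le_leftAct [IsFiniteMeasure μ] (hK : IsBoundedKernel K) {t : ℝ} {r a : Ω → ℝ}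
    (hr : IsLeftEigen μ (Function.swap K) t r) (hr0 : ∀ᵐ x ∂μ, 0 < r x) (ha : MemLp a 2 μ)
    (hle : t • a ≤ᵐ[μ] leftAct μ K a) : IsLeftEigen μ K t a := by
  have ha1 : Integrable a μ := ha.integrable one_le_two
  have hKa : MemLp (leftAct μ K a) 2 μ := hK.memLp_leftAct ha1 2
  have hintK : Integrable (fun x => r x * leftAct μ K a x) μ := hr.memLp.integrable_mul hKa
  have hint : Integrable (fun x => r x * (t • a) x) μ :=
    hr.memLp.integrable_mul (ha.const_smul t)
  have hnn : 0 ≤ᵐ[μ] fun x => r x * leftAct μ K a x - r x * (t • a) x := by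
    filter_upwards [hle, hr0] with x hx hrx
    exact sub_nonneg.2 (mul_le_mul_of_nonneg_left hx hrx.le)
  have hzero : ∫ x, (r x * leftAct μ K a x - r x * (t • a) x) ∂μ = 0 := by
    rw [integral_sub hintK hint, sub_eq_zero]
    refine (hr.integral_smul_leftAct hK ha1).trans ?_
    simp only [← integral_const_mul, Pi.smul_apply, smul_eq_mul, mul_left_comm]
  refine ⟨ha, ?_⟩
  filter_upwards [(integral_eq_zero_iff_of_nonneg_ae hnn (hintK.sub hint)).1 hzero, hr0]
    with x hx hrx
  exact mul_left_cancel₀ hrx.ne' (sub_eq_zero.1 hx)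

end IsLeftEigen

lemma isEigenvalue_iff {c : ℂ} :
    IsEigenvalue μ K c ↔ ∃ f, IsLeftEigen μ K c f ∧ ¬ f =ᵐ[μ] 0 := by
  have hact (f : Ω → ℂ) (x : Ω) : leftAct μ K f x = ∫ y, f y * (K y x : ℂ) ∂μ := by
    simp only [leftAct, Complex.real_smul, mul_comm]
  refine exists_congr fun f => ⟨fun ⟨hf, hf0, he⟩ => ⟨⟨hf, ?_⟩, hf0⟩, fun ⟨⟨hf, he⟩, hf0⟩ =>
    ⟨hf, hf0, ?_⟩⟩
  · exact he.mono fun x hx => (hact f x).trans hx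
  · exact he.mono fun x hx => (hact f x).symm.trans hx

variable [IsFiniteMeasure μ]

lemma IsLeftEigen.leftOp_toLp {𝕜 : Type*} [RCLike 𝕜] {c : 𝕜} {f : Ω → 𝕜}
    (hK : IsBoundedKernel K) (hf : IsLeftEigen μ K c f) :
    leftOp μ 𝕜 hK hf.memLp.toLp = c • hf.memLp.toLp := by
  rw [Digraphon.leftOp_toLp, ← MemLp.toLp_const_smul]
  exact MemLp.toLp_congr _ _ hf.leftAct_eq

lemma isLeftEigen_of_leftOp_eq {𝕜 : Type*} [RCLike 𝕜] {c : 𝕜} {f : Lp 𝕜 2 μ}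
    (hK : IsBoundedKernel K) (hf : leftOp μ 𝕜 hK f = c • f) : IsLeftEigen μ K c f := by
  refine ⟨Lp.memLp f, ?_⟩
  rw [← Lp.toLp_coeFn f (Lp.memLp f), Digraphon.leftOp_toLp, ← MemLp.toLp_const_smul,
    MemLp.toLp_eq_toLp_iff] at hf
  exact hf

lemma exists_norm_leftOp_pow_le (hK : IsBoundedKernel K) {s : ℝ} (hs : 0 < s)
    (heig : ∀ (c : ℂ) (f : Ω → ℂ), IsLeftEigen μ K c f → ¬ f =ᵐ[μ] 0 → ‖c‖ < s) :
    ∃ b ∈ Ioo 0 s, ∃ C > 0, ∀ n, ‖leftOp μ ℂ hK ^ n‖ ≤ C * b ^ n :=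
  exists_pow_norm_le_of_eigenvalues_lt (isCompactOperator_leftOp hK) hs fun c f hf hcf =>
    heig c f (isLeftEigen_of_leftOp_eq hK hcf) fun h => hf ((Lp.eq_zero_iff_ae_eq_zero).2 h)

lemma IsLeftEigen.norm_le_specRad (hK : IsBoundedKernel K) {c : ℂ} {f : Ω → ℂ}
    (hf : IsLeftEigen μ K c f) (hf0 : ¬ f =ᵐ[μ] 0) : ‖c‖ ≤ specRad μ K := by
  refine le_csSup ⟨‖leftOp μ ℂ hK‖, ?_⟩ <|
    mem_insert_of_mem _ ⟨c, isEigenvalue_iff.2 ⟨f, hf, hf0⟩, rfl⟩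
  rintro r (rfl | ⟨c, hc, rfl⟩)
  · exact norm_nonneg _
  · obtain ⟨g, hg, hg0⟩ := isEigenvalue_iff.1 hc
    have hpos : 0 < ‖hg.memLp.toLp‖ := norm_pos_iff.2 fun h => hg0 <|
      (MemLp.toLp_eq_toLp_iff hg.memLp MemLp.zero').1 h
    refine le_of_mul_le_mul_right ?_ hpos
    rw [← norm_smul, ← hg.leftOp_toLp hK]
    exact ContinuousLinearMap.le_opNorm _ _

end Eigenfunction

section Perron

variable {μ : Measure Ω}

instance {p : ℝ≥0∞} : PosSMulMono ℝ (Lp ℝ p μ) := .of_smul_nonneg fun c hc f hf => by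
  rw [← Lp.coeFn_nonneg] at hf ⊢
  filter_upwards [hf, Lp.coeFn_smul c f] with x hx hcx
  exact (mul_nonneg hc hx).trans_eq hcx.symm

lemma inner_Lp_nonneg {f g : Lp ℝ 2 μ} (hf : 0 ≤ f) (hg : 0 ≤ g) : 0 ≤ inner ℝ f g := by
  rw [L2.inner_def]
  refine integral_nonneg_of_ae ?_
  filter_upwards [(Lp.coeFn_nonneg f).2 hf, (Lp.coeFn_nonneg g).2 hg] with x hfx hgx
  exact mul_nonneg hgx hfx

variable [IsFiniteMeasure μ] {K : Ω → Ω → ℝ} {t : ℝ}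

lemma leftOp_nonneg (hK : IsBoundedKernel K) (hK0 : ∀ x y, 0 ≤ K x y) {f : Lp ℝ 2 μ}
    (hf : 0 ≤ f) : 0 ≤ leftOp μ ℝ hK f := by
  rw [← Lp.coeFn_nonneg] at hf ⊢
  rw [← Lp.toLp_coeFn f (Lp.memLp f), leftOp_toLp]
  filter_upwards [MemLp.coeFn_toLp (hK.memLp_leftAct ((Lp.memLp f).integrable one_le_two) 2)]
    with x hx
  exact (leftAct_nonneg hK0 hf x).trans_eq hx.symm

lemma exists_nonneg_isLeftEigen (hK : IsBoundedKernel K) (hK0 : ∀ x y, 0 ≤ K x y) (ht : 0 < t)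
    (heig : ∀ (c : ℂ) (f : Ω → ℂ), IsLeftEigen μ K c f → ¬ f =ᵐ[μ] 0 → ‖c‖ ≤ t)
    {u : Ω → ℝ} (hu : MemLp u 2 μ) (hu0 : 0 ≤ᵐ[μ] u) (hune : ¬ u =ᵐ[μ] 0)
    (hle : t • u ≤ᵐ[μ] leftAct μ K u) :
    ∃ l : Ω → ℝ, IsLeftEigen μ K t l ∧ 0 ≤ᵐ[μ] l ∧ ¬ l =ᵐ[μ] 0 := by
  have hule : t • hu.toLp ≤ leftOp μ ℝ hK hu.toLp := by
    rw [leftOp_toLp, ← MemLp.toLp_const_smul, ← Lp.coeFn_le]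
    exact ((hu.const_smul t).coeFn_toLp.le.trans hle).trans (MemLp.coeFn_toLp _).symm.le
  have hgrowth (b : ℝ) (hb : t < b) : ∃ C, ∀ n, ‖(leftOp μ ℝ hK ^ n) hu.toLp‖ ≤ C * b ^ n := by
    obtain ⟨b', hb', C, hC, hbound⟩ := exists_norm_leftOp_pow_le (μ := μ) hK (ht.trans hb)
      fun c f hf hf0 => (heig c f hf hf0).trans_lt hb
    refine ⟨C * ‖(MemLp.ofReal (K := ℂ) hu).toLp‖, fun n => ?_⟩
    rw [← norm_leftOp_pow_toLp_ofReal, mul_right_comm]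
    refine (ContinuousLinearMap.le_of_opNorm_le _ (hbound n) _).trans ?_
    gcongr
    exacts [hb'.1.le, hb'.2.le]
  obtain ⟨l, hl0, hlne, hl⟩ := exists_nonneg_eigenvector (fun _ _ => inner_Lp_nonneg)
    (isCompactOperator_leftOp hK) (fun _ => leftOp_nonneg hK hK0) ht
    ((Lp.coeFn_nonneg _).1 (hu0.trans hu.coeFn_toLp.symm.le))
    (fun h => hune ((MemLp.toLp_eq_toLp_iff hu MemLp.zero').1 h)) hule hgrowth
  exact ⟨l, isLeftEigen_of_leftOp_eq hK hl, (Lp.coeFn_nonneg l).2 hl0,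
    fun h => hlne ((Lp.eq_zero_iff_ae_eq_zero).2 h)⟩

variable {𝕜 : Type*} [RCLike 𝕜] {c : 𝕜} {f : Ω → 𝕜}

lemma IsLeftEigen.norm (hK : IsBoundedKernel K) (hK0 : ∀ x y, 0 ≤ K x y) {r : Ω → ℝ}
    (hr : IsLeftEigen μ (Function.swap K) ‖c‖ r) (hr0 : ∀ᵐ x ∂μ, 0 < r x)
    (hf : IsLeftEigen μ K c f) : IsLeftEigen μ K ‖c‖ fun x => ‖f x‖ :=
  .of_smul_le_leftAct hK hr hr0 hf.memLp.norm (hf.norm_smul_le_leftAct_norm hK0)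

lemma IsIrreducible.ae_norm_pos (hI : IsIrreducible μ K) (hK : IsBoundedKernel K)
    (hK0 : ∀ x y, 0 ≤ K x y) (hf : IsLeftEigen μ K t fun x => ‖f x‖) (hf0 : ¬ f =ᵐ[μ] 0) :
    ∀ᵐ x ∂μ, 0 < ‖f x‖ :=
  hI.ae_pos_of_leftAct_le hK hK0 hf.integrable (.of_forall fun _ => norm_nonneg _)
    (fun h => hf0 (h.mono fun _ hx => norm_eq_zero.1 hx)) hf.leftAct_eq.le

/-- A nonnegative left eigenfunction `l`, positive by irreducibility, serves as the dual weight
that turns `|r|` from a subinvariant function into an eigenfunction. -/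
lemma IsIrreducible.isLeftEigen_swap_norm_and_ae_pos (hI : IsIrreducible μ K)
    (hK : IsBoundedKernel K) (hK0 : ∀ x y, 0 ≤ K x y) (ht : 0 < t)
    (heig : ∀ (c : ℂ) (f : Ω → ℂ), IsLeftEigen μ K c f → ¬ f =ᵐ[μ] 0 → ‖c‖ ≤ t)
    {l r : Ω → ℝ} (hl : IsLeftEigen μ K t l) (hl0 : ¬ l =ᵐ[μ] 0)
    (hr : IsLeftEigen μ (Function.swap K) t r) (hr0 : ¬ r =ᵐ[μ] 0) :
    IsLeftEigen μ (Function.swap K) t (fun x => ‖r x‖) ∧ ∀ᵐ x ∂μ, 0 < ‖r x‖ := by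
  have hnorm : ‖t‖ = t := Real.norm_of_nonneg ht.le
  obtain ⟨p, hp, hp0, hpne⟩ := exists_nonneg_isLeftEigen hK hK0 ht heig hl.memLp.norm
    (.of_forall fun _ => norm_nonneg _) (fun h => hl0 (h.mono fun _ hx => norm_eq_zero.1 hx))
    (hnorm ▸ hl.norm_smul_le_leftAct_norm hK0)
  have hppos := hI.ae_pos_of_leftAct_le hK hK0 hp.integrable hp0 hpne hp.leftAct_eq.le
  have hr' := IsLeftEigen.norm hK.swap (fun x y => hK0 y x) (hnorm.symm ▸ hp) hppos hr
  rw [hnorm] at hr'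
  exact ⟨hr', hI.swap.ae_norm_pos hK.swap (fun x y => hK0 y x) hr' hr0⟩

end Perron

section FiniteOrder

lemma isOfFinOrder_of_eigenvectors {𝕜 E : Type*} [NontriviallyNormedField 𝕜]
    [NormedAddCommGroup E] [NormedSpace 𝕜 E] {T : E →L[𝕜] E} (hT : IsCompactOperator T)
    {t c : 𝕜} (ht : t ≠ 0) {ℓ : E →L[𝕜] 𝕜} (hℓ : ∀ x, ℓ (T x) = t * ℓ x) {e : ℕ → E} {R : ℝ}
    (he : ∀ n, T (e n) = (t * c ^ n) • e n) (hR : ∀ n, ‖e n‖ ≤ R)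
    (hshift : ∀ i n, ‖T (e i) - T (e (i + n))‖ = ‖T (e 0) - T (e n)‖) (h0 : ℓ (e 0) ≠ 0) :
    IsOfFinOrder c := by
  have hδ : 0 < ‖t * ℓ (e 0)‖ / (‖ℓ‖ + 1) :=
    div_pos (norm_pos_iff.2 (mul_ne_zero ht h0)) (by positivity)
  obtain ⟨i, j, hij, hclose⟩ := exists_lt_norm_map_sub_lt hT hR hδ
  obtain ⟨n, rfl⟩ := Nat.exists_eq_add_of_le hij.le
  rw [hshift, lt_div_iff₀' (by positivity)] at hclose
  have hℓn : ℓ (e n) ≠ 0 := fun hzero => hclose.not_ge <| calc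
    ‖t * ℓ (e 0)‖ = ‖ℓ (T (e 0) - T (e n))‖ := by rw [map_sub, hℓ, hℓ, hzero, mul_zero, sub_zero]
    _ ≤ ‖ℓ‖ * ‖T (e 0) - T (e n)‖ := ℓ.le_opNorm _
    _ ≤ (‖ℓ‖ + 1) * ‖T (e 0) - T (e n)‖ := by gcongr; linarith
  refine isOfFinOrder_iff_pow_eq_one.2 ⟨n, by omega, ?_⟩
  have hdual := hℓ (e n)
  rw [he, map_smul, smul_eq_mul] at hdual
  exact mul_left_cancel₀ ht ((mul_right_cancel₀ hℓn hdual).trans (mul_one t).symm)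

end FiniteOrder

section Phase

lemma ae_norm_smul_eq_of_norm_integral_eq {α E : Type*} [MeasurableSpace α] {μ : Measure α}
    [NormedAddCommGroup E] [InnerProductSpace ℝ E] [CompleteSpace E] {g : α → E} {u : E}
    (hu : ‖u‖ = 1) (hg : Integrable g μ) (h : ∫ y, g y ∂μ = (∫ y, ‖g y‖ ∂μ) • u) :
    ∀ᵐ y ∂μ, g y = ‖g y‖ • u := by
  have hle (y : α) : inner ℝ u (g y) ≤ ‖g y‖ := by simpa [hu] using real_inner_le_norm u (g y)
  have hint : Integrable (fun y => ‖g y‖ - inner ℝ u (g y)) μ := hg.norm.sub (hg.const_inner u)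
  have hzero : ∫ y, (‖g y‖ - inner ℝ u (g y)) ∂μ = 0 := by
    rw [integral_sub hg.norm (hg.const_inner u), integral_inner hg, h, inner_smul_right,
      real_inner_self_eq_norm_sq, hu, one_pow, mul_one, sub_self]
  filter_upwards [(integral_eq_zero_iff_of_nonneg (fun y => sub_nonneg.2 (hle y)) hint).1 hzero]
    with y hy
  have hinner : inner ℝ u (g y) = ‖u‖ * ‖g y‖ := by rw [hu, one_mul]; exact (sub_eq_zero.1 hy).symm
  simpa [hu] using (inner_eq_norm_mul_iff_real.1 hinner).symm

/-- The unimodular part `exp (i arg z)` of a complex number, with the value `1` at `0`. -/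
noncomputable def phase (z : ℂ) : ℂ := Complex.exp (z.arg * Complex.I)

lemma measurable_phase : Measurable phase := by
  unfold phase
  fun_prop

lemma norm_phase (z : ℂ) : ‖phase z‖ = 1 := Complex.norm_exp_ofReal_mul_I _

lemma norm_smul_phase (z : ℂ) : ‖z‖ • phase z = z := Complex.norm_mul_exp_arg_mul_I z


variable {μ : Measure Ω}

lemma inner_toLp_ofReal {r : Ω → ℝ} (hr : MemLp r 2 μ) {g : Ω → ℂ} (hg : MemLp g 2 μ) :
    inner ℂ (MemLp.ofReal (K := ℂ) hr).toLp hg.toLp = ∫ x, r x • g x ∂μ := by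
  rw [L2.inner_def]
  refine integral_congr_ae ?_
  filter_upwards [(MemLp.ofReal (K := ℂ) hr).coeFn_toLp, hg.coeFn_toLp] with x hrx hgx
  rw [hrx, hgx, RCLike.inner_apply, RCLike.conj_ofReal, Complex.real_smul, mul_comm]
  rfl

lemma integral_mul_pos_of_ae_pos [NeZero μ] {r a : Ω → ℝ} (hr : MemLp r 2 μ) (ha : MemLp a 2 μ)
    (hr0 : ∀ᵐ x ∂μ, 0 < r x) (ha0 : ∀ᵐ x ∂μ, 0 < a x) : 0 < ∫ x, r x * a x ∂μ := by
  have hpos : ∀ᵐ x ∂μ, 0 < r x * a x := by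
    filter_upwards [hr0, ha0] with x hx hax using mul_pos hx hax
  have hnn : 0 ≤ᵐ[μ] fun x => r x * a x := hpos.mono fun _ => le_of_lt
  refine (integral_nonneg_of_ae hnn).lt_of_ne' fun hzero => ?_
  obtain ⟨x, hx, hx0⟩ :=
    (hpos.and ((integral_eq_zero_iff_of_nonneg_ae hnn (hr.integrable_mul ha)).1 hzero)).exists
  exact hx.ne' hx0

variable [IsFiniteMeasure μ] {K : Ω → Ω → ℝ} {c : ℂ} {f : Ω → ℂ}

/-- Equality holds in `‖∫ K y x • f y‖ ≤ ∫ K y x * ‖f y‖`, so all `f y` with `K y x ≠ 0` point in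
the direction of `c * f x`. -/
lemma IsLeftEigen.phase_eq (hK : IsBoundedKernel K) (hK0 : ∀ x y, 0 ≤ K x y) (hc : c ≠ 0)
    (hf : IsLeftEigen μ K c f) (hnorm : IsLeftEigen μ K ‖c‖ fun x => ‖f x‖)
    (hpos : ∀ᵐ x ∂μ, 0 < ‖f x‖) (hfm : Measurable f) :
    ∀ᵐ p ∂μ.prod μ, K p.1 p.2 ≠ 0 → phase (f p.1) = c / ‖c‖ * phase (f p.2) := by
  have hset : MeasurableSet {p : Ω × Ω | K p.2 p.1 ≠ 0 → phase (f p.2) = c / ‖c‖ * phase (f p.1)} :=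
    (hK.swap.measurable (measurableSet_singleton 0)).compl.imp <| measurableSet_eq_fun
      (measurable_phase.comp (hfm.comp measurable_snd))
      ((measurable_phase.comp (hfm.comp measurable_fst)).const_mul _)
  refine (Measure.measurePreserving_swap (μ := μ) (ν := μ)).quasiMeasurePreserving.ae
    ((Measure.ae_prod_iff_ae_ae hset).2 ?_)
  filter_upwards [hf.leftAct_eq, hnorm.leftAct_eq] with x hx hnx
  have hc' : (‖c‖ : ℂ) ≠ 0 := by simpa using hc
  have hu : ‖c / ‖c‖ * phase (f x)‖ = 1 := by simp [norm_phase, hc]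
  have hmass : ∫ y, ‖K y x • f y‖ ∂μ = ‖c‖ * ‖f x‖ := by
    simp only [norm_smul, Real.norm_of_nonneg (hK0 _ x)]
    exact hnx
  have hint : ∫ y, K y x • f y ∂μ = (∫ y, ‖K y x • f y‖ ∂μ) • (c / ‖c‖ * phase (f x)) := by
    refine Eq.trans hx ?_
    nth_rw 1 [hmass, Pi.smul_apply, ← norm_smul_phase (f x)]
    simp only [Complex.real_smul, smul_eq_mul, Complex.ofReal_mul]
    field_simp
  filter_upwards [ae_norm_smul_eq_of_norm_integral_eq hu
    (hK.swap.integrable_smul hf.integrable x) hint, hpos] with y hy hfy hKy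
  rw [norm_smul, Real.norm_of_nonneg (hK0 y x), mul_smul] at hy
  refine smul_right_injective ℂ hfy.ne' ?_
  exact (norm_smul_phase _).trans (smul_right_injective ℂ hKy hy)

lemma IsLeftEigen.inner_leftOp (hK : IsBoundedKernel K) {t : ℝ} {r : Ω → ℝ}
    (hr : IsLeftEigen μ (Function.swap K) t r) (g : Lp ℂ 2 μ) :
    inner ℂ (MemLp.ofReal (K := ℂ) hr.memLp).toLp (leftOp μ ℂ hK g) =
      t * inner ℂ (MemLp.ofReal (K := ℂ) hr.memLp).toLp g := by
  have hg := Lp.memLp g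
  rw [← Lp.toLp_coeFn g hg, Digraphon.leftOp_toLp, inner_toLp_ofReal hr.memLp,
    inner_toLp_ofReal hr.memLp, hr.integral_smul_leftAct hK (hg.integrable one_le_two),
    Complex.real_smul]

lemma IsLeftEigen.smul_pow {t : ℝ} {a : Ω → ℝ} (ha : IsLeftEigen μ K t a) {φ : Ω → ℂ}
    (hφ : Measurable φ) (hφ1 : ∀ x, ‖φ x‖ = 1)
    (hedge : ∀ᵐ p ∂μ.prod μ, K p.1 p.2 ≠ 0 → φ p.1 = c * φ p.2) (n : ℕ) :
    IsLeftEigen μ K (t * c ^ n) fun x => a x • φ x ^ n := by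
  refine ⟨ha.memLp.of_le (ha.memLp.1.smul (hφ.pow_const n).aestronglyMeasurable) <|
    .of_forall fun x => by simp [hφ1], ?_⟩
  have hedge' := Measure.ae_ae_of_ae_prod <|
    (Measure.measurePreserving_swap (μ := μ) (ν := μ)).quasiMeasurePreserving.ae hedge
  filter_upwards [hedge', ha.leftAct_eq] with x hx hax
  calc leftAct μ K (fun y => a y • φ y ^ n) x
      = ∫ y, (K y x • a y) • (c * φ x) ^ n ∂μ := integral_congr_ae <| hx.mono fun y hy => by
        by_cases h0 : K y x = 0
        · simp only [h0, zero_smul]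
        · have hyx : φ y = c * φ x := hy h0
          simp only [smul_assoc, hyx]
    _ = leftAct μ K a x • (c * φ x) ^ n := integral_smul_const _ _
    _ = (t * c ^ n) • a x • φ x ^ n := by
        simp only [hax, Pi.smul_apply, Complex.real_smul, smul_eq_mul, Complex.ofReal_mul, mul_pow]
        ring

lemma IsLeftEigen.isOfFinOrder (hK : IsBoundedKernel K) {t : ℝ} (ht : t ≠ 0) {a r : Ω → ℝ}
    (ha : IsLeftEigen μ K t a) (hr : IsLeftEigen μ (Function.swap K) t r)
    (hra : ∫ x, r x * a x ∂μ ≠ 0) {φ : Ω → ℂ} (hφ : Measurable φ) (hφ1 : ∀ x, ‖φ x‖ = 1)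
    (hc : ‖c‖ = 1) (hedge : ∀ᵐ p ∂μ.prod μ, K p.1 p.2 ≠ 0 → φ p.1 = c * φ p.2) :
    IsOfFinOrder c := by
  have he := ha.smul_pow hφ hφ1 hedge
  let e (n : ℕ) : Lp ℂ 2 μ := (he n).memLp.toLp
  have hTe (n : ℕ) : leftOp μ ℂ hK (e n) = (t * c ^ n) • e n := (he n).leftOp_toLp hK
  refine isOfFinOrder_of_eigenvectors (T := leftOp μ ℂ hK) (e := e) (isCompactOperator_leftOp hK)
    (Complex.ofReal_ne_zero.2 ht)
    (ℓ := innerSL ℂ (MemLp.ofReal (K := ℂ) hr.memLp).toLp) (R := ‖ha.memLp.toLp‖)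
    (hr.inner_leftOp hK) hTe (fun n => ?_) (fun i n => ?_) ?_
  · rw [Lp.norm_toLp, Lp.norm_toLp]
    exact (congrArg _ (eLpNorm_congr_norm_ae (.of_forall fun x => by simp [hφ1]))).le
  · simp only [hTe, e, ← MemLp.toLp_const_smul, ← MemLp.toLp_sub, Lp.norm_toLp]
    refine congrArg _ (eLpNorm_congr_norm_ae (.of_forall fun x => ?_))
    have hunit : ‖c ^ i * φ x ^ i‖ = 1 := by simp [hc, hφ1]
    have hfactor : t * c ^ i * (a x * φ x ^ i) - t * c ^ (i + n) * (a x * φ x ^ (i + n)) =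
        c ^ i * φ x ^ i * (t * c ^ 0 * (a x * φ x ^ 0) - t * c ^ n * (a x * φ x ^ n)) := by ring
    simp only [Pi.sub_apply, Pi.smul_apply, smul_eq_mul, Complex.real_smul]
    rw [hfactor, norm_mul, hunit, one_mul]
  · rw [innerSL_apply_apply, inner_toLp_ofReal hr.memLp]
    simp only [pow_zero, ← smul_assoc, smul_eq_mul]
    rw [integral_smul_const]
    simpa using hra

lemma IsLeftEigen.exists_phase (hK : IsBoundedKernel K) (hK0 : ∀ x y, 0 ≤ K x y) (hc : c ≠ 0)
    (hf : IsLeftEigen μ K c f) (hnorm : IsLeftEigen μ K ‖c‖ fun x => ‖f x‖)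
    (hpos : ∀ᵐ x ∂μ, 0 < ‖f x‖) :
    ∃ φ : Ω → ℂ, Measurable φ ∧ (∀ x, ‖φ x‖ = 1) ∧ (f =ᵐ[μ] fun x => ‖f x‖ • φ x) ∧
      ∀ᵐ p ∂μ.prod μ, K p.1 p.2 ≠ 0 → φ p.1 = c / ‖c‖ * φ p.2 := by
  have hfg := hf.memLp.1.ae_eq_mk
  have hgm := hf.memLp.1.stronglyMeasurable_mk.measurable
  refine ⟨_, measurable_phase.comp hgm, fun x => norm_phase _, ?_, ?_⟩
  · filter_upwards [hfg] with x hx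
    rw [Function.comp_apply, ← hx, norm_smul_phase]
  · exact (hf.congr hfg).phase_eq hK hK0 hc (hnorm.congr (hfg.mono fun _ => congrArg _))
      (hpos.mp (hfg.mono fun x hx h => hx ▸ h)) hgm

lemma IsIrreducible.exists_ae_eq_norm_smul (hI : IsIrreducible μ K) (hK : IsBoundedKernel K)
    (hK0 : ∀ x y, 0 ≤ K x y) {t : ℝ} (ht : 0 < t) (hf : IsLeftEigen μ K (t : ℂ) f)
    (hnorm : IsLeftEigen μ K t fun x => ‖f x‖) (hpos : ∀ᵐ x ∂μ, 0 < ‖f x‖) :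
    ∃ u : ℂ, f =ᵐ[μ] fun x => ‖f x‖ • u := by
  have htn : ‖(t : ℂ)‖ = t := Complex.norm_of_nonneg ht.le
  have htc : (t : ℂ) ≠ 0 := Complex.ofReal_ne_zero.2 ht.ne'
  obtain ⟨φ, hφ, -, hfφ, hedge⟩ := hf.exists_phase hK hK0 htc (htn.symm ▸ hnorm) hpos
  obtain ⟨u, hu⟩ := hI.ae_eq_const hφ <| hedge.mono fun p hp hne => by
    rw [hp hne, htn, div_self htc, one_mul]
  exact ⟨u, by filter_upwards [hfφ, hu] with x hx hux using hux ▸ hx⟩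

lemma Aperiodic.eigenvalue_eq_norm [NeZero μ] (hap : Aperiodic μ K) (hI : IsIrreducible μ K)
    (hK : IsBoundedKernel K) (hK0 : ∀ x y, 0 ≤ K x y) (hc : c ≠ 0) (hf : IsLeftEigen μ K c f)
    (hpos : ∀ᵐ x ∂μ, 0 < ‖f x‖) {r : Ω → ℝ} (hr : IsLeftEigen μ (Function.swap K) ‖c‖ r)
    (hr0 : ∀ᵐ x ∂μ, 0 < r x) : c = ‖c‖ := by
  have hnorm := IsLeftEigen.norm hK hK0 hr hr0 hf
  have hcn : (‖c‖ : ℂ) ≠ 0 := Complex.ofReal_ne_zero.2 (norm_ne_zero_iff.2 hc)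
  obtain ⟨φ, hφ, hφ1, -, hedge⟩ := hf.exists_phase hK hK0 hc hnorm hpos
  have hφ0 (x : Ω) : φ x ≠ 0 := norm_ne_zero_iff.1 ((hφ1 x).trans_ne one_ne_zero)
  have hk : IsOfFinOrder (c / ‖c‖) := hnorm.isOfFinOrder hK (norm_ne_zero_iff.2 hc) hr
    (integral_mul_pos_of_ae_pos hr.memLp hnorm.memLp hr0 hpos).ne' hφ hφ1 (by simp [hc]) hedge
  refine (div_eq_one_iff_eq hcn).1 <| hap.eq_one_of_edge_mul hI hk hφ.inv
    (.of_forall fun x => inv_ne_zero (hφ0 x)) <| hedge.mono fun p hp hne => ?_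
  rw [Pi.inv_apply, Pi.inv_apply, hp hne, mul_inv, mul_comm, mul_inv_cancel_left₀]
  exact div_ne_zero hc hcn

end Phase

section PowerBound

variable {μ : Measure Ω} [IsFiniteMeasure μ] {K : Ω → Ω → ℝ}

lemma IsBoundedKernel.exists_norm_toLp_le (hK : IsBoundedKernel K) :
    ∃ N, ∀ x, ‖(hK.memLp (μ := μ) 2 x).toLp‖ ≤ N := by
  obtain ⟨M, hM0, hM⟩ := hK.exists_bound
  refine ⟨_, fun x => Lp.norm_le_of_ae_bound hM0 ?_⟩
  filter_upwards [(hK.memLp (μ := μ) 2 x).coeFn_toLp] with y hy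
  exact hy ▸ hM x y

lemma abs_leftAct_le_norm_mul_norm (hK : IsBoundedKernel K) {f : Ω → ℝ} (hf : MemLp f 2 μ)
    (y : Ω) : |leftAct μ K f y| ≤ ‖(hK.swap.memLp (μ := μ) 2 y).toLp‖ * ‖hf.toLp‖ := by
  refine le_of_eq_of_le (congrArg _ ?_) (abs_real_inner_le_norm _ _)
  rw [L2.inner_def]
  refine integral_congr_ae ?_
  filter_upwards [(hK.swap.memLp (μ := μ) 2 y).coeFn_toLp, hf.coeFn_toLp] with z hKz hfz
  rw [hKz, hfz]
  exact mul_comm _ _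

lemma exists_abs_kpowAux_le (hK : IsBoundedKernel K) {s : ℝ} (hs : 0 < s)
    (heig : ∀ (c : ℂ) (f : Ω → ℂ), IsLeftEigen μ K c f → ¬ f =ᵐ[μ] 0 → ‖c‖ < s) :
    ∃ b ∈ Ioo 0 s, ∃ C > 0, ∀ n x y, |kpowAux μ K n x y| ≤ C * b ^ (n + 1) := by
  obtain ⟨b, hb, C, hC, hpow⟩ := exists_norm_leftOp_pow_le (μ := μ) hK hs heig
  obtain ⟨M, hM0, hM⟩ := hK.exists_bound
  obtain ⟨R, hR⟩ := hK.exists_norm_toLp_le (μ := μ)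
  obtain ⟨N, hN⟩ := hK.swap.exists_norm_toLp_le (μ := μ)
  have hb0 : 0 < b := hb.1
  have hstep (n : ℕ) (x y : Ω) : |kpowAux μ K (n + 1) x y| ≤ |N| * (C * b ^ n * |R|) := by
    have hrow := hK.memLp (μ := μ) 2 x
    rw [kpowAux_succ_right hK, kpowAux_eq_iterate hK]
    refine (abs_leftAct_le_norm_mul_norm hK (hK.memLp_leftAct_iterate hrow n) y).trans ?_
    rw [← leftOp_pow_toLp hK hrow, ← norm_leftOp_pow_toLp_ofReal hK hrow]
    gcongr
    · exact (hN y).trans (le_abs_self N)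
    · refine ContinuousLinearMap.le_of_opNorm_le_of_le _ (hpow n) ?_
      exact (norm_leftOp_pow_toLp_ofReal hK hrow 0).trans_le ((hR x).trans (le_abs_self R))
  refine ⟨b, hb, M / b + |N| * C * |R| / b ^ 2 + 1, by positivity, fun n x y => ?_⟩
  rw [add_mul, add_mul]
  obtain _ | n := n
  · have hMb : M / b * b ^ 1 = M := by field_simp
    have : 0 ≤ |N| * C * |R| / b ^ 2 * b ^ 1 := by positivity
    linarith [hM x y, show |kpowAux μ K 0 x y| = |K x y| from rfl]
  · have hNb : |N| * C * |R| / b ^ 2 * b ^ (n + 2) = |N| * (C * b ^ n * |R|) := by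
      rw [pow_add]
      field_simp
    have : 0 ≤ M / b * b ^ (n + 2) := by positivity
    have : 0 ≤ b ^ (n + 2) := by positivity
    linarith [hstep n x y]

end PowerBound

section Deflation

/-- The kernel `K` with the rank-one kernel `t r ⊗ l` removed, where `l` and `r` are meant to be
left and right eigenfunctions of `K` for the eigenvalue `t`. -/
def deflate (K : Ω → Ω → ℝ) (t : ℝ) (l r : Ω → ℝ) (x y : Ω) : ℝ := K x y - t * (r x * l y)

/-- A bounded measurable function satisfying the eigenvalue equation at every point. Replacing an
eigenfunction by such a representative makes the formulas for powers of kernels hold everywhere. -/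
structure IsBoundedLeftEigen (μ : Measure Ω) (K : Ω → Ω → ℝ) (t : ℝ) (f : Ω → ℝ) : Prop where
  measurable : Measurable f
  exists_bound : ∃ M, ∀ x, ‖f x‖ ≤ M
  leftAct_eq : leftAct μ K f = t • f

variable {μ : Measure Ω} {K : Ω → Ω → ℝ} {t : ℝ} {l r : Ω → ℝ}

lemma isBoundedKernel_deflate (hK : IsBoundedKernel K) (hl : Measurable l)
    (hlb : ∃ L, ∀ x, ‖l x‖ ≤ L) (hr : Measurable r) (hrb : ∃ R, ∀ x, ‖r x‖ ≤ R) :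
    IsBoundedKernel (deflate K t l r) := by
  obtain ⟨M, hM0, hM⟩ := hK.exists_bound
  obtain ⟨L, hL⟩ := hlb
  obtain ⟨R, hR⟩ := hrb
  refine ⟨hK.measurable.sub (((hr.comp measurable_fst).mul
    (hl.comp measurable_snd)).const_mul t), M + |t| * (|R| * |L|), by positivity,
    fun x y => (abs_sub _ _).trans ?_⟩
  rw [abs_mul, abs_mul]
  have hrx : |r x| ≤ |R| := (hR x).trans (le_abs_self R)
  have hly : |l y| ≤ |L| := (hL y).trans (le_abs_self L)
  gcongr
  exact hM x y

lemma IsBoundedLeftEigen.isBoundedKernel_deflate (hl : IsBoundedLeftEigen μ K t l)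
    (hK : IsBoundedKernel K) (hr : IsBoundedLeftEigen μ (Function.swap K) t r) :
    IsBoundedKernel (deflate K t l r) :=
  Digraphon.isBoundedKernel_deflate hK hl.measurable hl.exists_bound hr.measurable hr.exists_bound

variable [IsFiniteMeasure μ]

lemma IsBoundedLeftEigen.isLeftEigen (hl : IsBoundedLeftEigen μ K t l) : IsLeftEigen μ K t l :=
  let ⟨M, hM⟩ := hl.exists_bound
  ⟨.of_bound hl.measurable.aestronglyMeasurable M (.of_forall hM), hl.leftAct_eq.eventuallyEq⟩

lemma IsLeftEigen.exists_isBoundedLeftEigen (hK : IsBoundedKernel K) (ht : t ≠ 0)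
    (hl : IsLeftEigen μ K t l) : ∃ g, IsBoundedLeftEigen μ K t g ∧ l =ᵐ[μ] g := by
  obtain ⟨M, -, hM⟩ := hK.exists_bound
  refine ⟨t⁻¹ • leftAct μ K l,
    ⟨(hK.stronglyMeasurable_leftAct hl.memLp.1).measurable.const_smul t⁻¹,
      ⟨‖t⁻¹‖ * (M * ∫ y, ‖l y‖ ∂μ), fun x => ?_⟩, ?_⟩, ?_⟩
  · rw [Pi.smul_apply, norm_smul]
    gcongr
    exact norm_leftAct_le_of_bound hM hl.integrable x
  · rw [leftAct_const_smul, leftAct_congr hl.leftAct_eq, leftAct_const_smul, smul_comm]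
  · filter_upwards [hl.leftAct_eq] with x hx
    rw [Pi.smul_apply, hx, Pi.smul_apply, inv_smul_smul₀ ht]

lemma leftAct_deflate {E : Type*} [NormedAddCommGroup E] [NormedSpace ℝ E]
    (hK : IsBoundedKernel K) (hr : MemLp r 2 μ) {f : Ω → E} (hf : MemLp f 2 μ) (x : Ω) :
    leftAct μ (deflate K t l r) f x = leftAct μ K f x - (t * l x) • ∫ y, r y • f y ∂μ := by
  have hrf : Integrable (fun y => r y • f y) μ := memLp_one_iff_integrable.1 (hf.smul hr)
  rw [← integral_smul]
  refine Eq.trans ?_ (integral_sub (hK.swap.integrable_smul (hf.integrable one_le_two) x)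
    (hrf.smul _))
  refine integral_congr_ae (.of_forall fun y => ?_)
  simp only [deflate, sub_smul, smul_smul, mul_assoc, mul_comm (l x)]

lemma integral_smul_leftAct_deflate {E : Type*} [NormedAddCommGroup E] [NormedSpace ℝ E]
    [CompleteSpace E] (hK : IsBoundedKernel K) (hl : MemLp l 2 μ)
    (hr : IsLeftEigen μ (Function.swap K) t r) (hlr : ∫ x, r x * l x ∂μ = 1) {f : Ω → E}
    (hf : MemLp f 2 μ) : ∫ x, r x • leftAct μ (deflate K t l r) f x ∂μ = 0 := by
  have hf1 := hf.integrable one_le_two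
  have hint : Integrable (fun x => r x • leftAct μ K f x) μ :=
    memLp_one_iff_integrable.1 ((hK.memLp_leftAct hf1 2).smul hr.memLp)
  have hrl : Integrable (fun x => r x * l x) μ := hr.memLp.integrable_mul hl
  calc ∫ x, r x • leftAct μ (deflate K t l r) f x ∂μ
      = ∫ x, (r x • leftAct μ K f x - (r x * l x) • (t • ∫ y, r y • f y ∂μ)) ∂μ := by
        simp only [leftAct_deflate hK hr.memLp hf, smul_sub, smul_smul, mul_assoc, mul_comm t]
    _ = 0 := by
        rw [integral_sub hint (hrl.smul_const _), integral_smul_const, hlr, one_smul,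
          hr.integral_smul_leftAct hK hf1, sub_self]

lemma IsLeftEigen.of_deflate (hK : IsBoundedKernel K) (hl : MemLp l 2 μ)
    (hr : IsLeftEigen μ (Function.swap K) t r) (hlr : ∫ x, r x * l x ∂μ = 1) {c : ℂ} {f : Ω → ℂ}
    (hc : c ≠ 0) (hf : IsLeftEigen μ (deflate K t l r) c f) :
    IsLeftEigen μ K c f ∧ ∫ x, r x • f x ∂μ = 0 := by
  have hzero : ∫ x, r x • f x ∂μ = 0 := by
    refine (mul_eq_zero.1 ?_).resolve_left hc
    rw [← integral_smul_leftAct_deflate hK hl hr hlr hf.memLp, ← integral_const_mul]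
    refine integral_congr_ae (hf.leftAct_eq.mono fun x hx => ?_)
    simp only [hx, Pi.smul_apply, smul_eq_mul, mul_smul_comm]
  refine ⟨⟨hf.memLp, hf.leftAct_eq.mono fun x hx => ?_⟩, hzero⟩
  rw [← hx, leftAct_deflate hK hr.memLp hf.memLp, hzero, smul_zero, sub_zero]

lemma integral_smul_kpowAux_deflate (hK : IsBoundedKernel K) (hl : IsBoundedLeftEigen μ K t l)
    (hr : IsBoundedLeftEigen μ (Function.swap K) t r) (hlr : ∫ x, r x * l x ∂μ = 1) (n : ℕ)
    (x : Ω) : ∫ z, r z • kpowAux μ (deflate K t l r) n x z ∂μ = 0 := by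
  have hD := hl.isBoundedKernel_deflate hK hr
  have hlm := hl.isLeftEigen.memLp
  have hrl : Integrable (fun z => r z * l z) μ := hr.isLeftEigen.memLp.integrable_mul hlm
  obtain _ | n := n
  · calc ∫ z, r z • deflate K t l r x z ∂μ
        = ∫ z, (K x z • r z - (t * r x) * (r z * l z)) ∂μ := by
          simp only [deflate, smul_eq_mul]
          refine integral_congr_ae (.of_forall fun z => ?_)
          ring
      _ = leftAct μ (Function.swap K) r x - (t * r x) * ∫ z, r z * l z ∂μ := by
          rw [integral_sub (hK.integrable_smul hr.isLeftEigen.integrable x)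
            (hrl.const_mul _), integral_const_mul]
          rfl
      _ = 0 := by rw [hr.leftAct_eq, hlr, mul_one, Pi.smul_apply, smul_eq_mul, sub_self]
  · rw [kpowAux_succ_right hD]
    exact integral_smul_leftAct_deflate hK hlm hr.isLeftEigen hlr
      ((isBoundedKernel_kpowAux hD n).memLp 2 x)

lemma kpowAux_deflate (hK : IsBoundedKernel K) (hl : IsBoundedLeftEigen μ K t l)
    (hr : IsBoundedLeftEigen μ (Function.swap K) t r) (hlr : ∫ x, r x * l x ∂μ = 1) (n : ℕ)
    (x : Ω) :
    kpowAux μ (deflate K t l r) n x = kpowAux μ K n x - (t ^ (n + 1) * r x) • l := by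
  induction n with
  | zero =>
    funext y
    simp only [kpowAux, deflate, Pi.sub_apply, Pi.smul_apply, smul_eq_mul, zero_add, pow_one,
      mul_assoc]
  | succ n ih =>
    have hD := hl.isBoundedKernel_deflate hK hr
    have hDn : MemLp _ 2 μ := (isBoundedKernel_kpowAux (μ := μ) hD n).memLp 2 x
    have hKn : MemLp _ 2 μ := (isBoundedKernel_kpowAux (μ := μ) hK n).memLp 2 x
    have hln := hl.isLeftEigen.memLp.const_smul (t ^ (n + 1) * r x)
    calc kpowAux μ (deflate K t l r) (n + 1) x
        = leftAct μ K (kpowAux μ (deflate K t l r) n x) := by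
          rw [kpowAux_succ_right hD]
          funext y
          rw [leftAct_deflate hK hr.isLeftEigen.memLp hDn,
            integral_smul_kpowAux_deflate hK hl hr hlr, smul_zero, sub_zero]
      _ = kpowAux μ K (n + 1) x - (t ^ (n + 2) * r x) • l := by
          rw [ih, leftAct_sub hK (hKn.integrable one_le_two) (hln.integrable one_le_two),
            leftAct_const_smul, hl.leftAct_eq, smul_smul, kpowAux_succ_right hK,
            pow_succ _ (n + 1), mul_right_comm]

end Deflation

section Asymptotics

variable {μ : Measure Ω} [IsFiniteMeasure μ] [NeZero μ] {K : Ω → Ω → ℝ} {t : ℝ} {l r : Ω → ℝ}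

/-- Both `f` and `r` are, up to a constant factor, their own absolute values. -/
lemma IsIrreducible.integral_smul_ne_zero (hI : IsIrreducible μ K) (hK : IsBoundedKernel K)
    (hK0 : ∀ x y, 0 ≤ K x y) (ht : 0 < t) (hr : IsLeftEigen μ (Function.swap K) t r)
    (hr' : IsLeftEigen μ (Function.swap K) t fun x => ‖r x‖) (hr0 : ∀ᵐ x ∂μ, 0 < ‖r x‖)
    {f : Ω → ℂ} (hf : IsLeftEigen μ K (t : ℂ) f) (hf' : IsLeftEigen μ K t fun x => ‖f x‖)
    (hf0 : ∀ᵐ x ∂μ, 0 < ‖f x‖) : ∫ x, r x • f x ∂μ ≠ 0 := by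
  obtain ⟨u, hu⟩ := hI.exists_ae_eq_norm_smul hK hK0 ht hf hf' hf0
  obtain ⟨v, hv⟩ := hI.swap.exists_ae_eq_norm_smul hK.swap (fun x y => hK0 y x) ht hr.ofReal
    (by simpa using hr') (by simpa using hr0)
  have hprod : (fun x => r x • f x) =ᵐ[μ] fun x => (‖r x‖ * ‖f x‖) • (v * u) := by
    filter_upwards [hu, hv] with x hux hvx
    rw [Complex.real_smul, ← Function.comp_apply (f := Complex.ofReal), hvx]
    nth_rw 1 [hux]
    simp [mul_mul_mul_comm]
  obtain ⟨x, hx, hrx, hfx⟩ := (hprod.and (hr0.and hf0)).exists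
  rw [integral_congr_ae hprod, integral_smul_const]
  refine smul_ne_zero (integral_mul_pos_of_ae_pos hr'.memLp hf'.memLp hr0 hf0).ne' fun huv => ?_
  have hzero : r x • f x = 0 := hx.trans (by simp only [huv, smul_zero])
  exact smul_ne_zero (norm_pos_iff.1 hrx) (norm_pos_iff.1 hfx) hzero

lemma Aperiodic.norm_lt_of_isLeftEigen_deflate (hap : Aperiodic μ K) (hI : IsIrreducible μ K)
    (hK : IsBoundedKernel K) (hK0 : ∀ x y, 0 ≤ K x y) (ht : 0 < t)
    (heig : ∀ (c : ℂ) (f : Ω → ℂ), IsLeftEigen μ K c f → ¬ f =ᵐ[μ] 0 → ‖c‖ ≤ t)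
    (hl : IsLeftEigen μ K t l) (hr : IsLeftEigen μ (Function.swap K) t r)
    (hlr : ∫ x, r x * l x ∂μ = 1) {c : ℂ} {f : Ω → ℂ}
    (hf : IsLeftEigen μ (deflate K t l r) c f) (hf0 : ¬ f =ᵐ[μ] 0) : ‖c‖ < t := by
  by_contra! hle
  have hc : c ≠ 0 := norm_pos_iff.1 (ht.trans_le hle)
  obtain ⟨hfK, horth⟩ := IsLeftEigen.of_deflate hK hl.memLp hr hlr hc hf
  have hct : ‖c‖ = t := (heig c f hfK hf0).antisymm hle
  have hl0 : ¬ l =ᵐ[μ] 0 := fun h => zero_ne_one <| (integral_eq_zero_of_ae <|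
    h.mono fun x hx => by simp [hx]).symm.trans hlr
  have hr0 : ¬ r =ᵐ[μ] 0 := fun h => zero_ne_one <| (integral_eq_zero_of_ae <|
    h.mono fun x hx => by simp [hx]).symm.trans hlr
  obtain ⟨hr', hrpos⟩ := hI.isLeftEigen_swap_norm_and_ae_pos hK hK0 ht heig hl hl0 hr hr0
  have hf' := hct ▸ IsLeftEigen.norm hK hK0 (hct.symm ▸ hr') hrpos hfK
  have hfpos := hI.ae_norm_pos hK hK0 hf' hf0
  have hcreal : c = t := hct ▸ hap.eigenvalue_eq_norm hI hK hK0 hc hfK hfpos (hct.symm ▸ hr') hrpos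
  exact hI.integral_smul_ne_zero hK hK0 ht hr hr' hrpos (hcreal ▸ hfK) hf' hfpos horth

lemma Aperiodic.exists_abs_kpowAux_sub_le (hap : Aperiodic μ K) (hI : IsIrreducible μ K)
    (hK : IsBoundedKernel K) (hK0 : ∀ x y, 0 ≤ K x y) (ht : 0 < t)
    (heig : ∀ (c : ℂ) (f : Ω → ℂ), IsLeftEigen μ K c f → ¬ f =ᵐ[μ] 0 → ‖c‖ ≤ t)
    (hl : IsBoundedLeftEigen μ K t l) (hr : IsBoundedLeftEigen μ (Function.swap K) t r)
    (hlr : ∫ x, r x * l x ∂μ = 1) :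
    ∃ b ∈ Ioo 0 t, ∃ C > 0, ∀ n x y,
      |kpowAux μ K n x y - t ^ (n + 1) * r x * l y| ≤ C * b ^ (n + 1) := by
  obtain ⟨b, hb, C, hC, hbound⟩ := exists_abs_kpowAux_le (hl.isBoundedKernel_deflate hK hr) ht
    fun _ _ => hap.norm_lt_of_isLeftEigen_deflate hI hK hK0 ht heig hl.isLeftEigen hr.isLeftEigen
      hlr
  refine ⟨b, hb, C, hC, fun n x y => ?_⟩
  have hnxy := hbound n x y
  rwa [kpowAux_deflate hK hl hr hlr] at hnxy

end Asymptotics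

theorem asymptotics_of_powers_aperiodic_general {μ : Measure Ω} [IsFiniteMeasure μ]
    {W : Ω → Ω → ℝ} (hW : IsBoundedKernel W) (hW0 : ∀ x y, 0 ≤ W x y)
    (hconn : StronglyConnectedIn μ W univ) (haper : Aperiodic μ W)
    (hτ : 0 < specRad μ W) {wL wR : Ω → ℝ} (hL : IsLeftEigen μ W (specRad μ W) wL)
    (hR : IsLeftEigen μ (Function.swap W) (specRad μ W) wR) (hnorm : ∫ x, wL x * wR x ∂μ = 1) :
    ∃ β ∈ Ioo 0 (specRad μ W), ∃ C > 0, ∀ ℓ ≥ 1, ∀ᵐ p ∂μ.prod μ,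
      |dpow μ W ℓ p.1 p.2 - specRad μ W ^ ℓ * wR p.1 * wL p.2| ≤ C * β ^ ℓ := by
  have : NeZero μ := ⟨fun h => by simp [h] at hnorm⟩
  obtain ⟨l, hl, hLl⟩ := hL.exists_isBoundedLeftEigen hW hτ.ne'
  obtain ⟨r, hr, hRr⟩ := hR.exists_isBoundedLeftEigen hW.swap hτ.ne'
  have hlr : ∫ x, r x * l x ∂μ = 1 := by
    rw [← hnorm]
    refine integral_congr_ae ?_
    filter_upwards [hLl, hRr] with x hx hrx
    rw [hx, hrx, mul_comm]
  obtain ⟨β, hβ, C, hC, hbound⟩ := haper.exists_abs_kpowAux_sub_le hconn.isIrreducible hW hW0 hτ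
    (fun _ _ => IsLeftEigen.norm_le_specRad hW) hl hr hlr
  refine ⟨β, hβ, C, hC, fun ℓ hℓ => ?_⟩
  filter_upwards [Measure.quasiMeasurePreserving_fst.ae hRr,
    Measure.quasiMeasurePreserving_snd.ae hLl] with p hp₁ hp₂
  have hp := hbound (ℓ - 1) p.1 p.2
  rwa [Nat.sub_add_cancel hℓ, ← hp₁, ← hp₂] at hp

/-- Asymptotics of high powers of a strongly connected aperiodic
digraphon. -/
theorem asymptotics_of_powers_aperiodic
    {Ω : Type*} [MeasurableSpace Ω] (μ : Measure Ω) [IsProbabilityMeasure μ]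
    (W : Ω → Ω → ℝ) (hW : IsDigraphon W)
    (hconn : StronglyConnectedIn μ W Set.univ)
    (haper : Aperiodic μ W)
    (hτ : 0 < specRad μ W)
    (wL wR : Ω → ℝ)
    (hwL2 : MemLp wL 2 μ) (hwL0 : ¬(wL =ᵐ[μ] 0))
    (hwLeig : ∀ᵐ x ∂μ, ∫ y, wL y * W y x ∂μ = specRad μ W * wL x)
    (hwR2 : MemLp wR 2 μ) (hwR0 : ¬(wR =ᵐ[μ] 0))
    (hwReig : ∀ᵐ x ∂μ, ∫ y, W x y * wR y ∂μ = specRad μ W * wR x)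
    (hnorm : ∫ x, wL x * wR x ∂μ = 1) :
    ∃ β : ℝ, β ∈ Set.Ioo 0 (specRad μ W) ∧ ∃ C : ℝ, 0 < C ∧
      ∀ ℓ : ℕ, 1 ≤ ℓ →
        ∀ᵐ p : Ω × Ω ∂(μ.prod μ),
          |dpow μ W ℓ p.1 p.2 - specRad μ W ^ ℓ * wR p.1 * wL p.2| ≤ C * β ^ ℓ := by
  simp only [mul_comm (wL _)] at hwLeig
  exact asymptotics_of_powers_aperiodic_general hW.isBoundedKernel (fun x y => (hW.2 x y).1) hconn
    haper hτ ⟨hwL2, hwLeig⟩ ⟨hwR2, hwReig⟩ hnorm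

end Digraphon
end

section
/- Let Γ be a digraphon on a probability space (Ω,μ), let x ∈ Ω, let Y ⊆ Ω be measurable, and let c ∈ [0,1). Define h : Ω → [0,1] by h(z) := μ(ReachOut_Γ(z) ∩ Y). If the set of points y reachable from x with h(y) > c has positive measure, then h(x) > c. -/
open MeasureTheory Filter Set Topology
open scoped ENNReal Real

namespace Digraphon

variable {Ω : Type*} [MeasurableSpace Ω]

/-!
Reachability need not be transitive, since a walk through a single point `y` may carry no mass.
But `Γ ^ (n + m)` is the composition of `Γ ^ n` and `Γ ^ m`, so for fixed `x` and `w` the points `y`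
with `Γ ^ n x y > 0` and `Γ ^ m y w > 0` form a null set unless `Γ ^ (n + m) x w > 0`. By Fubini,
almost every `y` reachable from `x` then satisfies `ReachOut y ⊆ ReachOut x` up to a null set, and
a set of positive measure contains such a `y`.
-/

/-- A bounded measurable real function. On a finite measure space every such function is integrable,
and the class is stable under the products and partial integrals that occur in kernel powers. -/
structure BddMeasurable {α : Type*} [MeasurableSpace α] (f : α → ℝ) : Prop where
  measurable : Measurable f
  exists_norm_le : ∃ C, ∀ x, ‖f x‖ ≤ C

/-- The composition of two kernels through an intermediate measure space, i.e. matrix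
multiplication with summation replaced by integration; kernel powers are iterated compositions. -/
noncomputable def kernelComp {α β γ : Type*} [MeasurableSpace β] (μ : Measure β)
    (K : α → β → ℝ) (L : β → γ → ℝ) : α → γ → ℝ :=
  fun x z => ∫ y, K x y * L y z ∂μ

section KernelComp

variable {α β γ δ : Type*} [MeasurableSpace β] {K : α → β → ℝ} {L : β → γ → ℝ} {M : γ → δ → ℝ}

theorem kernelComp_nonneg (μ : Measure β) (hK : 0 ≤ K) (hL : 0 ≤ L) : 0 ≤ kernelComp μ K L :=
  fun x z => integral_nonneg fun y => mul_nonneg (hK x y) (hL y z)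

variable [MeasurableSpace α] [MeasurableSpace γ] [MeasurableSpace δ]

namespace BddMeasurable

theorem comp {f : β → ℝ} {g : α → β} (hf : BddMeasurable f) (hg : Measurable g) :
    BddMeasurable (f ∘ g) :=
  ⟨hf.measurable.comp hg, hf.exists_norm_le.imp fun _ hC x => hC (g x)⟩

theorem mul {f g : α → ℝ} (hf : BddMeasurable f) (hg : BddMeasurable g) :
    BddMeasurable fun x => f x * g x := by
  obtain ⟨C, hC⟩ := hf.exists_norm_le
  obtain ⟨D, hD⟩ := hg.exists_norm_le
  exact ⟨hf.measurable.mul hg.measurable, C * D, fun x => norm_mul_le_of_le (hC x) (hD x)⟩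

theorem integrable {f : α → ℝ} (hf : BddMeasurable f) (μ : Measure α) [IsFiniteMeasure μ] :
    Integrable f μ := by
  obtain ⟨C, hC⟩ := hf.exists_norm_le
  exact .of_bound hf.measurable.aestronglyMeasurable C (.of_forall hC)

end BddMeasurable

theorem measurable_kernelComp (μ : Measure β) [SFinite μ]
    (hK : Measurable (Function.uncurry K)) (hL : Measurable (Function.uncurry L)) :
    Measurable (Function.uncurry (kernelComp μ K L)) := by
  have integrand_measurable :
      Measurable fun q : (α × γ) × β => K q.1.1 q.2 * L q.2 q.1.2 :=
    (hK.comp (measurable_fst.fst.prodMk measurable_snd)).mul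
      (hL.comp (measurable_snd.prodMk measurable_fst.snd))
  exact integrand_measurable.stronglyMeasurable.integral_prod_right.measurable

namespace BddMeasurable

theorem kernelComp (μ : Measure β) [IsFiniteMeasure μ] (hK : BddMeasurable (Function.uncurry K))
    (hL : BddMeasurable (Function.uncurry L)) :
    BddMeasurable (Function.uncurry (kernelComp μ K L)) := by
  obtain ⟨C, hC⟩ := hK.exists_norm_le
  obtain ⟨D, hD⟩ := hL.exists_norm_le
  exact ⟨measurable_kernelComp μ hK.measurable hL.measurable, C * D * μ.real univ, fun p =>
    norm_integral_le_of_norm_le_const <| .of_forall fun y =>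
      norm_mul_le_of_le (hC (p.1, y)) (hD (y, p.2))⟩

theorem integrable_kernel_mul (μ : Measure β) [IsFiniteMeasure μ]
    (hK : BddMeasurable (Function.uncurry K)) (hL : BddMeasurable (Function.uncurry L))
    (x : α) (z : γ) : Integrable (fun y => K x y * L y z) μ :=
  ((hK.comp measurable_prodMk_left).mul (hL.comp measurable_prodMk_right)).integrable μ

end BddMeasurable

theorem kernelComp_assoc (μ : Measure β) [IsFiniteMeasure μ] (ν : Measure γ) [IsFiniteMeasure ν]
    (hK : BddMeasurable (Function.uncurry K)) (hL : BddMeasurable (Function.uncurry L))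
    (hM : BddMeasurable (Function.uncurry M)) :
    kernelComp ν (kernelComp μ K L) M =
      kernelComp μ K (kernelComp ν L M) := by
  ext x w
  have integrand_integrable :
      Integrable (fun p : γ × β => K x p.2 * L p.2 p.1 * M p.1 w) (ν.prod μ) :=
    ((hK.comp (measurable_const.prodMk measurable_snd)).mul (hL.comp measurable_swap)).mul
      (hM.comp (measurable_fst.prodMk measurable_const)) |>.integrable _
  calc ∫ z, (∫ y, K x y * L y z ∂μ) * M z w ∂ν
      = ∫ z, ∫ y, K x y * L y z * M z w ∂μ ∂ν := by simp_rw [integral_mul_const]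
    _ = ∫ y, ∫ z, K x y * L y z * M z w ∂ν ∂μ := integral_integral_swap integrand_integrable
    _ = ∫ y, K x y * ∫ z, L y z * M z w ∂ν ∂μ := by simp_rw [mul_assoc, integral_const_mul]

theorem ae_kernelComp_pos_of_pos (μ : Measure β) [IsFiniteMeasure μ]
    (hK : BddMeasurable (Function.uncurry K)) (hL : BddMeasurable (Function.uncurry L))
    (hK₀ : 0 ≤ K) (hL₀ : 0 ≤ L) (x : α) (z : γ) :
    ∀ᵐ y ∂μ, 0 < K x y → 0 < L y z → 0 < kernelComp μ K L x z := by
  rcases (kernelComp_nonneg μ hK₀ hL₀ x z).eq_or_lt' with comp_eq_zero | comp_pos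
  · have product_ae_zero : (fun y => K x y * L y z) =ᵐ[μ] 0 :=
      (integral_eq_zero_iff_of_nonneg (fun y => mul_nonneg (hK₀ x y) (hL₀ y z))
        (hK.integrable_kernel_mul μ hL x z)).1 comp_eq_zero
    filter_upwards [product_ae_zero] with y hy hKy hLy
    exact absurd hy (mul_pos hKy hLy).ne'
  · exact .of_forall fun _ _ _ => comp_pos

end KernelComp

section Reachability

variable {μ : Measure Ω} {Γ : Ω → Ω → ℝ}

theorem kpowAux_succ (μ : Measure Ω) (Γ : Ω → Ω → ℝ) (n : ℕ) :
    kpowAux μ Γ (n + 1) = kernelComp μ Γ (kpowAux μ Γ n) :=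
  rfl

theorem measurable_kpowAux [SFinite μ] (hΓ : Measurable (Function.uncurry Γ)) (n : ℕ) :
    Measurable (Function.uncurry (kpowAux μ Γ n)) := by
  induction n with
  | zero => exact hΓ
  | succ n ih => exact measurable_kernelComp μ hΓ ih

theorem kpowAux_nonneg (hΓ₀ : 0 ≤ Γ) (n : ℕ) : 0 ≤ kpowAux μ Γ n := by
  induction n with
  | zero => exact hΓ₀
  | succ n ih => exact kernelComp_nonneg μ hΓ₀ ih

theorem BddMeasurable.kpowAux [IsFiniteMeasure μ] (hΓ : BddMeasurable (Function.uncurry Γ))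
    (n : ℕ) : BddMeasurable (Function.uncurry (kpowAux μ Γ n)) := by
  induction n with
  | zero => exact hΓ
  | succ n ih => exact hΓ.kernelComp μ ih

theorem kernelComp_kpowAux [IsFiniteMeasure μ] (hΓ : BddMeasurable (Function.uncurry Γ))
    (n m : ℕ) : kernelComp μ (kpowAux μ Γ n) (kpowAux μ Γ m) = kpowAux μ Γ (n + m + 1) := by
  induction n with
  | zero => rw [Nat.zero_add, kpowAux_succ, kpowAux]
  | succ n ih =>
    rw [kpowAux_succ, kernelComp_assoc μ μ hΓ (hΓ.kpowAux n) (hΓ.kpowAux m), ih, ← kpowAux_succ,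
      Nat.add_right_comm n 1 m]

theorem mem_reachOut_iff {x y : Ω} : y ∈ ReachOut μ Γ x ↔ ∃ n, 0 < kpowAux μ Γ n x y :=
  ⟨fun ⟨k, _, hk⟩ => ⟨k - 1, hk⟩, fun ⟨n, hn⟩ => ⟨n + 1, n.succ_pos, hn⟩⟩

theorem measurableSet_setOf_mem_reachOut [SFinite μ] (hΓ : Measurable (Function.uncurry Γ)) :
    MeasurableSet {p : Ω × Ω | p.2 ∈ ReachOut μ Γ p.1} := by
  simp_rw [mem_reachOut_iff, ofPred_exists]
  exact .iUnion fun n => measurableSet_lt measurable_const (measurable_kpowAux hΓ n)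

theorem ae_mem_reachOut_trans [IsFiniteMeasure μ] (hΓ : BddMeasurable (Function.uncurry Γ))
    (hΓ₀ : 0 ≤ Γ) (x w : Ω) :
    ∀ᵐ y ∂μ, y ∈ ReachOut μ Γ x → w ∈ ReachOut μ Γ y → w ∈ ReachOut μ Γ x := by
  have powers_pos : ∀ᵐ y ∂μ, ∀ n m, 0 < kpowAux μ Γ n x y → 0 < kpowAux μ Γ m y w →
      0 < kpowAux μ Γ (n + m + 1) x w := by
    simp_rw [ae_all_iff, ← kernelComp_kpowAux hΓ]
    exact fun n m => ae_kernelComp_pos_of_pos μ (hΓ.kpowAux n) (hΓ.kpowAux m)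
      (kpowAux_nonneg hΓ₀ n) (kpowAux_nonneg hΓ₀ m) x w
  simp_rw [mem_reachOut_iff]
  filter_upwards [powers_pos] with y hy ⟨n, hn⟩ ⟨m, hm⟩
  exact ⟨n + m + 1, hy n m hn hm⟩

theorem ae_reachOut_ae_le [IsFiniteMeasure μ] (hΓ : BddMeasurable (Function.uncurry Γ))
    (hΓ₀ : 0 ≤ Γ) (x : Ω) :
    ∀ᵐ y ∂μ, y ∈ ReachOut μ Γ x → ReachOut μ Γ y ≤ᵐ[μ] ReachOut μ Γ x := by
  have reach_measurable := measurableSet_setOf_mem_reachOut (μ := μ) hΓ.measurable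
  have reachOut_measurable : MeasurableSet (ReachOut μ Γ x) :=
    measurable_prodMk_left (x := x) reach_measurable
  have trans_measurable : MeasurableSet {p : Ω × Ω |
      p.2 ∈ ReachOut μ Γ x → p.1 ∈ ReachOut μ Γ p.2 → p.1 ∈ ReachOut μ Γ x} :=
    (measurable_snd reachOut_measurable).imp
      ((measurable_swap reach_measurable).imp (measurable_fst reachOut_measurable))
  have ae_ae_trans : ∀ᵐ y ∂μ, ∀ᵐ w ∂μ,
      y ∈ ReachOut μ Γ x → w ∈ ReachOut μ Γ y → w ∈ ReachOut μ Γ x :=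
    (Measure.ae_ae_comm trans_measurable).1 (.of_forall (ae_mem_reachOut_trans hΓ hΓ₀ x))
  filter_upwards [ae_ae_trans] with y hy hxy
  exact hy.mono fun w hw => hw hxy

theorem IsDigraphon.bddMeasurable (hΓ : IsDigraphon Γ) : BddMeasurable (Function.uncurry Γ) :=
  ⟨hΓ.1, 1, fun p => (Real.norm_of_nonneg (hΓ.2 p.1 p.2).1).trans_le (hΓ.2 p.1 p.2).2⟩

theorem IsDigraphon.nonneg (hΓ : IsDigraphon Γ) : 0 ≤ Γ :=
  fun x y => (hΓ.2 x y).1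

theorem calculus_of_reachability_general [IsFiniteMeasure μ]
    (hΓ : BddMeasurable (Function.uncurry Γ)) (hΓ₀ : 0 ≤ Γ) {x : Ω} {Y : Set Ω} {c : ℝ}
    (h : 0 < μ {y | y ∈ ReachOut μ Γ x ∧ c < (μ (ReachOut μ Γ y ∩ Y)).toReal}) :
    c < (μ (ReachOut μ Γ x ∩ Y)).toReal := by
  have frequently_large : ∃ᵐ y ∂μ,
      y ∈ ReachOut μ Γ x ∧ c < (μ (ReachOut μ Γ y ∩ Y)).toReal :=
    frequently_ae_iff.2 h.ne'
  obtain ⟨y, ⟨hxy, hcy⟩, hy⟩ :=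
    (frequently_large.and_eventually (ae_reachOut_ae_le hΓ hΓ₀ x)).exists
  calc c < (μ (ReachOut μ Γ y ∩ Y)).toReal := hcy
    _ ≤ (μ (ReachOut μ Γ x ∩ Y)).toReal :=
      ENNReal.toReal_mono (measure_ne_top _ _)
        (measure_mono_ae ((hy hxy).inter (EventuallyLE.refl _ _)))

end Reachability

/-- Calculus of reachability: if a positive measure of points reachable
from `x` each reach at least measure `c` of `Y`, then so does `x`. -/
theorem calculus_of_reachability
    {Ω : Type*} [MeasurableSpace Ω] (μ : Measure Ω) [IsProbabilityMeasure μ]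
    (Γ : Ω → Ω → ℝ) (hΓ : IsDigraphon Γ)
    (x : Ω) (Y : Set Ω) (hY : MeasurableSet Y)
    (c : ℝ) (hc0 : 0 ≤ c) (hc1 : c < 1)
    (h : 0 < μ {y | y ∈ ReachOut μ Γ x ∧ c < (μ (ReachOut μ Γ y ∩ Y)).toReal}) :
    c < (μ (ReachOut μ Γ x ∩ Y)).toReal := by
  exact calculus_of_reachability_general hΓ.bddMeasurable hΓ.nonneg h

end Digraphon
end

section
/- Let (Ω,μ) be a probability space, let W ∈ L^∞(Ω×Ω) be a (complex-valued) bounded measurable kernel, and let α > ρ(T_W), where T_W is the induced integral operator on L²(Ω,μ). Then there exists C > 0 such that for all k ∈ ℕ, ‖W^k‖_∞ ≤ C·α^k, where W^k denotes the k-fold kernel power and ‖·‖_∞ the essential supremum norm on Ω×Ω. -/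
open MeasureTheory Filter Set Topology
open scoped ENNReal Real

namespace Digraphon

variable {Ω : Type*} [MeasurableSpace Ω]

/-!
Write `f W` for the row vector `f` times the kernel `W`, so that `T f = f W` and the rows of `W ^ k`
are `(W ^ k) x = (W x) W ^ (k - 1)`. Associativity (Fubini) turns this into
`(W ^ (n + 2)) x = (T ^ n (W x)) W` for almost every `x`. Multiplication by a bounded kernel maps
`L¹` to `L^∞`, and `L^∞ ⊆ L^p ⊆ L¹` on a finite measure space, so
`‖W ^ (n + 2)‖_∞ ≤ μ(Ω) ‖W‖_∞ ^ 2 ‖T ^ n‖`. By Gelfand's formula `‖T ^ n‖ = O(α ^ n)`.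
-/

section SpectralRadius

open Asymptotics

variable {A : Type*} [NormedRing A] [NormedAlgebra ℂ A] [CompleteSpace A]

lemma spectralRadius_ne_top (a : A) : spectralRadius ℂ a ≠ ⊤ := by
  refine ne_top_of_le_ne_top ?_ (spectrum.spectralRadius_le_pow_nnnorm_pow_one_div ℂ a 0)
  simp [ENNReal.mul_eq_top]

lemma pow_isBigO_pow_of_spectralRadius_lt {a : A} {r : ℝ}
    (har : spectralRadius ℂ a < ENNReal.ofReal r) :
    (fun n : ℕ => a ^ n) =O[atTop] fun n => r ^ n := by
  have hr : 0 < r := ENNReal.ofReal_pos.1 (pos_of_gt har)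
  have hroot : ∀ᶠ n : ℕ in atTop, ENNReal.ofReal (‖a ^ n‖ ^ (1 / n : ℝ)) < ENNReal.ofReal r :=
    (spectrum.pow_norm_pow_one_div_tendsto_nhds_spectralRadius a).eventually_lt_const har
  refine .of_bound 1 ?_
  filter_upwards [hroot, eventually_ne_atTop 0] with n hn hn0
  rw [one_mul, Real.norm_of_nonneg (by positivity)]
  calc ‖a ^ n‖ = (‖a ^ n‖ ^ (1 / n : ℝ)) ^ n := by
        rw [one_div, Real.rpow_inv_natCast_pow (norm_nonneg _) hn0]
    _ ≤ r ^ n := by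
        gcongr
        exact ((ENNReal.ofReal_lt_ofReal_iff hr).1 hn).le

end SpectralRadius

section Kernel

variable {X Y Z : Type*} [MeasurableSpace X] {μ : Measure X} {𝕜 : Type*} [RCLike 𝕜]

/-- The row vector `f` multiplied by the kernel `K`: the analogue for kernels of `Matrix.vecMul`.
The integral operator of a kernel `W` is `f ↦ vecMul μ f W`, and the composition of kernels `K`
and `L` has rows `vecMul μ (K x) L`. -/
noncomputable def vecMul (μ : Measure X) (f : X → 𝕜) (K : X → Y → 𝕜) (y : Y) : 𝕜 :=
  ∫ x, f x * K x y ∂μ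

lemma vecMul_congr_ae {f g : X → 𝕜} (hfg : f =ᵐ[μ] g) (K : X → Y → 𝕜) :
    vecMul μ f K = vecMul μ g K :=
  funext fun y => integral_congr_ae (hfg.mul (ae_eq_refl fun x => K x y))

variable [MeasurableSpace Y] [MeasurableSpace Z] {ν : Measure Y} {ξ : Measure Z}

section Sections

variable {E : Type*} [NormedAddCommGroup E]

lemma ae_eLpNorm_top_row_le [SFinite ν] (K : X → Y → E) :
    ∀ᵐ x ∂μ, eLpNorm (K x) ⊤ ν ≤ eLpNorm (Function.uncurry K) ⊤ (μ.prod ν) := by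
  simp only [eLpNorm_exponent_top]
  filter_upwards [Measure.ae_ae_of_ae_prod
    (ae_le_eLpNormEssSup (f := Function.uncurry K) (μ := μ.prod ν))] with x hx
  exact eLpNormEssSup_le_of_ae_enorm_bound hx

lemma ae_eLpNorm_top_col_le [SFinite μ] [SFinite ν] (K : X → Y → E) :
    ∀ᵐ y ∂ν, eLpNorm (fun x => K x y) ⊤ μ ≤ eLpNorm (Function.uncurry K) ⊤ (μ.prod ν) := by
  simp only [eLpNorm_exponent_top]
  have hswap := (Measure.measurePreserving_swap (μ := ν) (ν := μ)).quasiMeasurePreserving.ae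
    (ae_le_eLpNormEssSup (f := Function.uncurry K) (μ := μ.prod ν))
  filter_upwards [Measure.ae_ae_of_ae_prod hswap] with y hy
  exact eLpNormEssSup_le_of_ae_enorm_bound hy

lemma eLpNorm_top_uncurry_le_of_ae_row [SFinite ν] {K : X → Y → E}
    (hK : AEStronglyMeasurable (Function.uncurry K) (μ.prod ν)) {C : ℝ≥0∞}
    (hC : ∀ᵐ x ∂μ, eLpNorm (K x) ⊤ ν ≤ C) :
    eLpNorm (Function.uncurry K) ⊤ (μ.prod ν) ≤ C := by
  have hmeas : MeasurableSet {p | ‖hK.mk _ p‖ₑ ≤ C} :=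
    measurableSet_le hK.stronglyMeasurable_mk.enorm measurable_const
  have hmk : ∀ᵐ p ∂μ.prod ν, ‖hK.mk _ p‖ₑ ≤ C := by
    rw [Measure.ae_prod_iff_ae_ae hmeas]
    filter_upwards [hC, Measure.ae_ae_of_ae_prod hK.ae_eq_mk] with x hx hxmk
    filter_upwards [ae_le_eLpNormEssSup (f := K x) (μ := ν), hxmk] with y hy hymk
    rw [← hymk]
    exact hy.trans (eLpNorm_exponent_top.symm.trans_le hx)
  rw [eLpNorm_congr_ae hK.ae_eq_mk, eLpNorm_exponent_top]
  exact eLpNormEssSup_le_of_ae_enorm_bound hmk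

end Sections

lemma eLpNorm_top_vecMul_le [SFinite μ] [SFinite ν] {f : X → 𝕜} (hf : AEStronglyMeasurable f μ)
    (K : X → Y → 𝕜) :
    eLpNorm (vecMul μ f K) ⊤ ν
      ≤ eLpNorm f 1 μ * eLpNorm (Function.uncurry K) ⊤ (μ.prod ν) := by
  rw [eLpNorm_exponent_top]
  refine eLpNormEssSup_le_of_ae_enorm_bound ?_
  filter_upwards [ae_eLpNorm_top_col_le (μ := μ) (ν := ν) K] with y hy
  have hcol : ∀ᵐ x ∂μ, ‖K x y‖ₑ ≤ eLpNorm (Function.uncurry K) ⊤ (μ.prod ν) := by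
    filter_upwards [ae_le_eLpNormEssSup (f := fun x => K x y) (μ := μ)] with x hx
    exact hx.trans (eLpNorm_exponent_top.symm.trans_le hy)
  calc ‖∫ x, f x * K x y ∂μ‖ₑ ≤ ∫⁻ x, ‖f x * K x y‖ₑ ∂μ := enorm_integral_le_lintegral_enorm _
    _ ≤ ∫⁻ x, ‖f x‖ₑ * eLpNorm (Function.uncurry K) ⊤ (μ.prod ν) ∂μ := by
        refine lintegral_mono_ae ?_
        filter_upwards [hcol] with x hx
        rw [enorm_mul]
        gcongr
    _ = eLpNorm f 1 μ * eLpNorm (Function.uncurry K) ⊤ (μ.prod ν) := by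
        rw [lintegral_mul_const'' _ hf.enorm, eLpNorm_one_eq_lintegral_enorm]

lemma aestronglyMeasurable_vecMul_row [SFinite μ] [SFinite ν] [SFinite ξ]
    {K : X → Y → 𝕜} {L : Y → Z → 𝕜}
    (hK : AEStronglyMeasurable (Function.uncurry K) (μ.prod ν))
    (hL : AEStronglyMeasurable (Function.uncurry L) (ν.prod ξ)) :
    AEStronglyMeasurable (Function.uncurry fun x => vecMul ν (K x) L) (μ.prod ξ) := by
  have hK' : AEStronglyMeasurable (fun q : (X × Z) × Y => K q.1.1 q.2) ((μ.prod ξ).prod ν) :=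
    hK.comp_quasiMeasurePreserving
      (QuasiMeasurePreserving.prodMap Measure.quasiMeasurePreserving_fst (.id ν))
  have hL' : AEStronglyMeasurable (fun q : (X × Z) × Y => L q.2 q.1.2) ((μ.prod ξ).prod ν) :=
    hL.prod_swap.comp_quasiMeasurePreserving
      (QuasiMeasurePreserving.prodMap Measure.quasiMeasurePreserving_snd (.id ν))
  exact (hK'.mul hL').integral_prod_right'

lemma memLp_top_vecMul_row [SFinite μ] [IsFiniteMeasure ν] [SFinite ξ]
    {K : X → Y → 𝕜} {L : Y → Z → 𝕜}
    (hK : MemLp (Function.uncurry K) ⊤ (μ.prod ν))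
    (hL : MemLp (Function.uncurry L) ⊤ (ν.prod ξ)) :
    MemLp (Function.uncurry fun x => vecMul ν (K x) L) ⊤ (μ.prod ξ) := by
  have hmeas := aestronglyMeasurable_vecMul_row hK.1 hL.1
  refine ⟨hmeas, lt_of_le_of_lt (b := eLpNorm (Function.uncurry K) ⊤ (μ.prod ν) * ν univ
    * eLpNorm (Function.uncurry L) ⊤ (ν.prod ξ)) ?_
    (ENNReal.mul_lt_top (ENNReal.mul_lt_top hK.2 (measure_lt_top ν _)) hL.2)⟩
  refine eLpNorm_top_uncurry_le_of_ae_row hmeas ?_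
  filter_upwards [hK.1.prodMk_left, ae_eLpNorm_top_row_le (μ := μ) (ν := ν) K] with x hxmeas hx
  refine (eLpNorm_top_vecMul_le hxmeas L).trans ?_
  gcongr
  calc eLpNorm (K x) 1 ν ≤ eLpNorm (K x) ⊤ ν * ν univ := by
        simpa using eLpNorm_le_eLpNorm_mul_rpow_measure_univ (p := 1) le_top hxmeas
    _ ≤ eLpNorm (Function.uncurry K) ⊤ (μ.prod ν) * ν univ := by gcongr

lemma vecMul_assoc_ae [SFinite μ] [IsFiniteMeasure ν] [SFinite ξ] {f : X → 𝕜}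
    (hf : Integrable f μ) {K : X → Y → 𝕜} (hK : MemLp (Function.uncurry K) ⊤ (μ.prod ν))
    {L : Y → Z → 𝕜} (hL : MemLp (Function.uncurry L) ⊤ (ν.prod ξ)) :
    vecMul μ f (fun x => vecMul ν (K x) L) =ᵐ[ξ] vecMul ν (vecMul μ f K) L := by
  filter_upwards [hL.1.prodMk_right, ae_eLpNorm_top_col_le (μ := ν) (ν := ξ) L] with z hzmeas hz
  have hcol : Integrable (fun y => L y z) ν :=
    MemLp.integrable le_top ⟨hzmeas, hz.trans_lt hL.2⟩
  have hint : Integrable (Function.uncurry fun x y => f x * (K x y * L y z)) (μ.prod ν) := by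
    refine ((hf.mul_prod hcol).mul_of_top_right hK).congr (.of_forall fun p => ?_)
    simp only [Function.uncurry, Pi.mul_apply]
    ring
  calc ∫ x, f x * ∫ y, K x y * L y z ∂ν ∂μ
      = ∫ x, ∫ y, f x * (K x y * L y z) ∂ν ∂μ := by simp only [integral_const_mul]
    _ = ∫ y, ∫ x, f x * (K x y * L y z) ∂μ ∂ν := integral_integral_swap hint
    _ = ∫ y, (∫ x, f x * K x y ∂μ) * L y z ∂ν := by simp only [← mul_assoc, integral_mul_const]

end Kernel

lemma eLpNorm_one_clm_toLp_le
    {X 𝕜 E F : Type*} [MeasurableSpace X] {μ : Measure X}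
    [NontriviallyNormedField 𝕜] [NormedAddCommGroup E] [NormedSpace 𝕜 E]
    [NormedAddCommGroup F] [NormedSpace 𝕜 F] {p : ℝ≥0∞} [Fact (1 ≤ p)]
    (S : Lp E p μ →L[𝕜] Lp F p μ) {f : X → E} (hf : MemLp f p μ) :
    eLpNorm (S (hf.toLp f)) 1 μ ≤ ‖S‖ₑ * eLpNorm f ⊤ μ * μ univ := by
  have hp : 1 ≤ p := Fact.out
  have hexp : 0 ≤ 1 - 1 / p.toReal := by
    rw [one_div, ← ENNReal.toReal_inv, sub_nonneg]
    exact ENNReal.toReal_mono ENNReal.one_ne_top (ENNReal.inv_le_one.2 hp)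
  calc eLpNorm (S (hf.toLp f)) 1 μ
      ≤ eLpNorm (S (hf.toLp f)) p μ * μ univ ^ (1 - 1 / p.toReal) := by
        simpa using eLpNorm_le_eLpNorm_mul_rpow_measure_univ hp (Lp.aestronglyMeasurable _)
    _ ≤ ‖S‖ₑ * eLpNorm f p μ * μ univ ^ (1 - 1 / p.toReal) := by
        gcongr
        simpa [Lp.enorm_def, eLpNorm_congr_ae hf.coeFn_toLp] using S.le_opENorm (hf.toLp f)
    _ ≤ ‖S‖ₑ * (eLpNorm f ⊤ μ * μ univ ^ (1 / p.toReal)) * μ univ ^ (1 - 1 / p.toReal) := by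
        gcongr
        simpa using eLpNorm_le_eLpNorm_mul_rpow_measure_univ le_top hf.1
    _ = ‖S‖ₑ * eLpNorm f ⊤ μ * μ univ := by
        rw [← mul_assoc, mul_assoc _ (_ ^ _), ← ENNReal.rpow_add_of_nonneg _ _ (by positivity) hexp,
          add_sub_cancel, ENNReal.rpow_one]

section KernelPower

open Asymptotics

variable {μ : Measure Ω} {W : Ω → Ω → ℂ}

lemma kpowAuxC_succ_eq_vecMul (n : ℕ) :
    kpowAuxC μ W (n + 1) = fun x => vecMul μ (W x) (kpowAuxC μ W n) :=
  rfl

variable [IsFiniteMeasure μ]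

lemma memLp_top_kpowAuxC (hW : MemLp (Function.uncurry W) ⊤ (μ.prod μ)) (n : ℕ) :
    MemLp (Function.uncurry (kpowAuxC μ W n)) ⊤ (μ.prod μ) := by
  induction n with
  | zero => exact hW
  | succ n ih =>
    rw [kpowAuxC_succ_eq_vecMul]
    exact memLp_top_vecMul_row hW ih

variable {p : ℝ≥0∞} [Fact (1 ≤ p)] {T : Lp ℂ p μ →L[ℂ] Lp ℂ p μ}

lemma vecMul_kpowAuxC_ae (hW : MemLp (Function.uncurry W) ⊤ (μ.prod μ))
    (hT : ∀ f : Lp ℂ p μ, T f =ᵐ[μ] vecMul μ f W) (n : ℕ) (f : Lp ℂ p μ) :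
    vecMul μ f (kpowAuxC μ W n) =ᵐ[μ] vecMul μ ((T ^ n) f) W := by
  induction n generalizing f with
  | zero => rfl
  | succ n ih =>
    calc vecMul μ f (kpowAuxC μ W (n + 1))
        = vecMul μ f (fun x => vecMul μ (W x) (kpowAuxC μ W n)) := by
          rw [kpowAuxC_succ_eq_vecMul]
      _ =ᵐ[μ] vecMul μ (vecMul μ f W) (kpowAuxC μ W n) :=
          vecMul_assoc_ae ((Lp.memLp f).integrable Fact.out) hW (memLp_top_kpowAuxC hW n)
      _ = vecMul μ (T f) (kpowAuxC μ W n) := vecMul_congr_ae (hT f).symm _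
      _ =ᵐ[μ] vecMul μ ((T ^ n) (T f)) W := ih (T f)
      _ = vecMul μ ((T ^ (n + 1)) f) W := by rw [pow_succ, mul_apply_eq_comp]

lemma eLpNorm_top_kpowAuxC_succ_le (hW : MemLp (Function.uncurry W) ⊤ (μ.prod μ))
    (hT : ∀ f : Lp ℂ p μ, T f =ᵐ[μ] vecMul μ f W) (n : ℕ) :
    eLpNorm (Function.uncurry (kpowAuxC μ W (n + 1))) ⊤ (μ.prod μ)
      ≤ ‖T ^ n‖ₑ * (eLpNorm (Function.uncurry W) ⊤ (μ.prod μ) * μ univ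
        * eLpNorm (Function.uncurry W) ⊤ (μ.prod μ)) := by
  refine eLpNorm_top_uncurry_le_of_ae_row (memLp_top_kpowAuxC hW (n + 1)).1 ?_
  filter_upwards [hW.1.prodMk_left, ae_eLpNorm_top_row_le (μ := μ) (ν := μ) W] with x hxmeas hx
  have hrow : MemLp (W x) p μ := MemLp.mono_exponent ⟨hxmeas, hx.trans_lt hW.2⟩ le_top
  calc eLpNorm (kpowAuxC μ W (n + 1) x) ⊤ μ
      = eLpNorm (vecMul μ (hrow.toLp (W x)) (kpowAuxC μ W n)) ⊤ μ := by
        rw [kpowAuxC_succ_eq_vecMul, vecMul_congr_ae hrow.coeFn_toLp]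
    _ = eLpNorm (vecMul μ ((T ^ n) (hrow.toLp (W x))) W) ⊤ μ :=
        eLpNorm_congr_ae (vecMul_kpowAuxC_ae hW hT n _)
    _ ≤ eLpNorm ((T ^ n) (hrow.toLp (W x))) 1 μ
          * eLpNorm (Function.uncurry W) ⊤ (μ.prod μ) :=
        eLpNorm_top_vecMul_le (Lp.aestronglyMeasurable _) W
    _ ≤ ‖T ^ n‖ₑ * eLpNorm (W x) ⊤ μ * μ univ
          * eLpNorm (Function.uncurry W) ⊤ (μ.prod μ) := by
        gcongr
        exact eLpNorm_one_clm_toLp_le (T ^ n) hrow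
    _ ≤ ‖T ^ n‖ₑ * (eLpNorm (Function.uncurry W) ⊤ (μ.prod μ) * μ univ
          * eLpNorm (Function.uncurry W) ⊤ (μ.prod μ)) := by
        rw [mul_assoc ‖T ^ n‖ₑ, mul_assoc ‖T ^ n‖ₑ]
        gcongr

lemma eLpNorm_top_kpowAuxC_succ_isBigO (hW : MemLp (Function.uncurry W) ⊤ (μ.prod μ))
    (hT : ∀ f : Lp ℂ p μ, T f =ᵐ[μ] vecMul μ f W) :
    (fun n => (eLpNorm (Function.uncurry (kpowAuxC μ W (n + 1))) ⊤ (μ.prod μ)).toReal)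
      =O[atTop] fun n => T ^ n := by
  set D : ℝ≥0∞ := eLpNorm (Function.uncurry W) ⊤ (μ.prod μ) * μ univ
    * eLpNorm (Function.uncurry W) ⊤ (μ.prod μ)
  have hD : D ≠ ⊤ :=
    ENNReal.mul_ne_top (ENNReal.mul_ne_top hW.2.ne (measure_ne_top μ _)) hW.2.ne
  refine .of_bound D.toReal (.of_forall fun n => ?_)
  rw [Real.norm_of_nonneg ENNReal.toReal_nonneg, mul_comm, ← toReal_enorm (T ^ n),
    ← ENNReal.toReal_mul]
  exact ENNReal.toReal_mono (ENNReal.mul_ne_top enorm_ne_top hD)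
    (eLpNorm_top_kpowAuxC_succ_le hW hT n)

end KernelPower

theorem kernel_powers_Linfty_growth_general
    (μ : Measure Ω) [IsFiniteMeasure μ]
    (W : Ω → Ω → ℂ) (hW : MemLp (Function.uncurry W) ⊤ (μ.prod μ))
    {p : ℝ≥0∞} [Fact (1 ≤ p)] (T : Lp ℂ p μ →L[ℂ] Lp ℂ p μ)
    (hT : ∀ f : Lp ℂ p μ, ⇑(T f) =ᵐ[μ] fun x => ∫ y, f y * W y x ∂μ)
    (α : ℝ) (hα : (spectralRadius ℂ T).toReal < α) :
    ∃ C : ℝ, 0 < C ∧ ∀ k : ℕ, 1 ≤ k →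
      (eLpNorm (Function.uncurry (dpowC μ W k)) ⊤ (μ.prod μ)).toReal ≤ C * α ^ k := by
  have hα0 : 0 < α := ENNReal.toReal_nonneg.trans_lt hα
  have hT_pow : (fun n => T ^ n) =O[atTop] fun n => α ^ n :=
    pow_isBigO_pow_of_spectralRadius_lt
      ((ENNReal.lt_ofReal_iff_toReal_lt (spectralRadius_ne_top T)).2 hα)
  have hshift : (fun n => α ^ n) =O[atTop] fun n => α ^ (n + 2) := by
    simpa only [pow_add, mul_comm] using
      (Asymptotics.isBigO_refl (fun n => α ^ n) atTop).const_mul_right (pow_ne_zero 2 hα0.ne')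
  have hO : (fun k => (eLpNorm (Function.uncurry (dpowC μ W k)) ⊤ (μ.prod μ)).toReal)
      =O[atTop] fun k => α ^ k := by
    rw [← map_add_atTop_eq_nat 2, Asymptotics.isBigO_map]
    exact ((eLpNorm_top_kpowAuxC_succ_isBigO hW hT).trans hT_pow).trans hshift
  obtain ⟨C, hC, hbound⟩ := Asymptotics.bound_of_isBigO_nat_atTop hO
  refine ⟨C, hC, fun k _ => ?_⟩
  simpa [abs_of_pos hα0] using hbound (pow_ne_zero k hα0.ne')

/-- If `α` exceeds the spectral radius of the integral operator induced by
a bounded kernel `W`, then `‖W^k‖_∞ = O(α^k)`. -/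
theorem kernel_powers_Linfty_growth
    {Ω : Type*} [MeasurableSpace Ω] (μ : Measure Ω) [IsProbabilityMeasure μ]
    (W : Ω → Ω → ℂ) (hWmeas : Measurable (Function.uncurry W))
    (hWbd : MemLp (Function.uncurry W) ⊤ (μ.prod μ))
    (T : Lp ℂ 2 μ →L[ℂ] Lp ℂ 2 μ)
    (hT : ∀ f : Lp ℂ 2 μ, ⇑(T f) =ᵐ[μ] fun x => ∫ y, f y * W y x ∂μ)
    (α : ℝ) (hα : (spectralRadius ℂ T).toReal < α) :
    ∃ C : ℝ, 0 < C ∧ ∀ k : ℕ, 1 ≤ k →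
      (eLpNorm (Function.uncurry (dpowC μ W k)) ⊤ (μ.prod μ)).toReal ≤ C * α ^ k :=
  kernel_powers_Linfty_growth_general μ W hWbd T hT α hα

end Digraphon
end

section
/- Let Γ be a strongly connected digraphon on a probability space (Ω,μ). Then the induced integral operator T_Γ on L²(Ω,μ) is irreducible: for every measurable set Z ⊆ Ω with 0 < μ(Z) < 1, the closed ideal I_Z = {f ∈ L²(Ω) : f = 0 almost everywhere on Z} is not invariant under T_Γ (i.e., T_Γ I_Z ⊄ I_Z); equivalently, the only ideals I of the Banach lattice L²(Ω) with T_Γ I ⊆ I are {0} and L²(Ω). -/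
open MeasureTheory Filter Set Topology
open scoped ENNReal Real

namespace Digraphon

variable {Ω : Type*} [MeasurableSpace Ω]

/-! For `A = Zᶜ`, Fubini's theorem identifies the mass of `Γ` on `A × Z` with the integral over `Z`
of `T_Γ 1_A`. Strong connectedness makes this mass positive, so `T_Γ 1_A` cannot vanish a.e. on `Z`
although `1_A` does. When `μ A = ∞`, so that `1_A` need not be in `Lᵖ`, replace `A` by a subset of
finite measure still carrying a nonzero integral. -/

theorem IsDigraphon.integrable_uncurry {Γ : Ω → Ω → ℝ} (hΓ : IsDigraphon Γ)
    (ν : Measure (Ω × Ω)) [IsFiniteMeasure ν] : Integrable (Function.uncurry Γ) ν :=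
  .of_mem_Icc 0 1 hΓ.1.aemeasurable (.of_forall fun p ↦ hΓ.2 p.1 p.2)

theorem integral_indicator_one_mul_ofReal {𝕜 : Type*} [RCLike 𝕜] {μ : Measure Ω} {A : Set Ω}
    (hA : MeasurableSet A) (k : Ω → ℝ) :
    ∫ y, A.indicator 1 y * (k y : 𝕜) ∂μ = ((∫ y in A, k y ∂μ : ℝ) : 𝕜) := by
  have hind (y : Ω) : A.indicator 1 y * (k y : 𝕜) = A.indicator (fun y ↦ (k y : 𝕜)) y := by
    by_cases hy : y ∈ A <;> simp [hy]
  simp_rw [hind]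
  rw [integral_indicator hA, integral_ofReal]

section Kernel

variable {Ω' E : Type*} [MeasurableSpace Ω'] [NormedAddCommGroup E] [NormedSpace ℝ E]
  {μ : Measure Ω} {ν : Measure Ω'}

theorem exists_subset_measure_lt_top_setIntegral_ne_zero [CompleteSpace E] {f : Ω → E} {A : Set Ω}
    (hA : MeasurableSet A) (hf : IntegrableOn f A μ) (hne : ∫ x in A, f x ∂μ ≠ 0) :
    ∃ s ⊆ A, MeasurableSet s ∧ μ s < ∞ ∧ ∫ x in s, f x ∂μ ≠ 0 := by
  contrapose! hne
  refine integral_eq_zero_of_ae (hf.ae_eq_zero_of_forall_setIntegral_eq_zero fun s hs hμs ↦ ?_)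
  rw [Measure.restrict_apply hs] at hμs
  rw [Measure.restrict_restrict hs]
  exact hne (s ∩ A) inter_subset_right (hs.inter hA) hμs

theorem not_ae_setIntegral_eq_zero_of_integral_ne_zero [SFinite μ] [SFinite ν]
    {K : Ω → Ω' → E} {A : Set Ω} {B : Set Ω'}
    (hK : IntegrableOn (Function.uncurry K) (A ×ˢ B) (μ.prod ν))
    (hne : ∫ y in A, ∫ x in B, K y x ∂ν ∂μ ≠ 0) :
    ¬∀ᵐ x ∂ν, x ∈ B → ∫ y in A, K y x ∂μ = 0 := by
  intro hzero
  rw [IntegrableOn, ← Measure.prod_restrict] at hK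
  rw [integral_integral_swap hK] at hne
  exact hne (setIntegral_eq_zero_of_ae_eq_zero hzero)

theorem exists_memLp_not_ae_integral_mul_eq_zero (𝕜 : Type*) [RCLike 𝕜] [SFinite μ] [SFinite ν]
    {K : Ω → Ω' → ℝ} (hK : Integrable (Function.uncurry K) (μ.prod ν)) (p : ℝ≥0∞)
    {A : Set Ω} {B : Set Ω'} (hA : MeasurableSet A) (hne : ∫ y in A, ∫ x in B, K y x ∂ν ∂μ ≠ 0) :
    ∃ f : Ω → 𝕜, MemLp f p μ ∧ (∀ y ∉ A, f y = 0) ∧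
      ¬∀ᵐ x ∂ν, x ∈ B → ∫ y, f y * (K y x : 𝕜) ∂μ = 0 := by
  have hrow : Integrable (fun y ↦ ∫ x in B, K y x ∂ν) μ :=
    (hK.mono_measure (Measure.prod_mono le_rfl Measure.restrict_le_self)).integral_prod_left
  obtain ⟨s, hsA, hs, hμs, hs_ne⟩ :=
    exists_subset_measure_lt_top_setIntegral_ne_zero hA hrow.integrableOn hne
  refine ⟨s.indicator 1, memLp_indicator_const p hs 1 (.inr hμs.ne),
    fun y hy ↦ indicator_of_notMem (notMem_subset hsA hy) 1, ?_⟩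
  simp_rw [integral_indicator_one_mul_ofReal hs, RCLike.ofReal_eq_zero]
  exact not_ae_setIntegral_eq_zero_of_integral_ne_zero hK.integrableOn hs_ne

end Kernel

theorem strongly_connected_implies_irreducible_general {𝕜 : Type*} [RCLike 𝕜] (μ : Measure Ω)
    [SFinite μ] (Γ : Ω → Ω → ℝ) (hΓ : Integrable (Function.uncurry Γ) (μ.prod μ))
    (hconn : StronglyConnectedIn μ Γ Set.univ) (p : ℝ≥0∞) :
    ∀ Z : Set Ω, MeasurableSet Z → 0 < μ Z → 0 < μ Zᶜ →
      ∃ f : Ω → 𝕜, MemLp f p μ ∧ (∀ᵐ x ∂μ, x ∈ Z → f x = 0) ∧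
        ¬∀ᵐ x ∂μ, x ∈ Z → ∫ y, f y * (Γ y x : 𝕜) ∂μ = 0 := by
  intro Z hZ hμZ hμZc
  have hmass : 0 < ∫ y in Zᶜ, ∫ x in Z, Γ y x ∂μ ∂μ :=
    hconn.2.2 Zᶜ Z hZ.compl hZ (compl_union_self Z) disjoint_compl_left hμZc hμZ
  obtain ⟨f, hf, hfZ, hTf⟩ :=
    exists_memLp_not_ae_integral_mul_eq_zero 𝕜 hΓ p hZ.compl hmass.ne'
  exact ⟨f, hf, .of_forall fun x hx ↦ hfZ x (notMem_compl_iff.mpr hx), hTf⟩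

/-- A strongly connected digraphon induces an irreducible operator: no
nontrivial closed ideal `I_Z` of the Banach lattice `L²(Ω)` is invariant under `T_Γ`. -/
theorem strongly_connected_implies_irreducible
    {Ω : Type*} [MeasurableSpace Ω] (μ : Measure Ω) [IsProbabilityMeasure μ]
    (Γ : Ω → Ω → ℝ) (hΓ : IsDigraphon Γ)
    (hconn : StronglyConnectedIn μ Γ Set.univ) :
    ∀ Z : Set Ω, MeasurableSet Z → 0 < μ Z → μ Z < 1 →
      ∃ f : Ω → ℂ, MemLp f 2 μ ∧ (∀ᵐ x ∂μ, x ∈ Z → f x = 0) ∧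
        ¬(∀ᵐ x ∂μ, x ∈ Z → (∫ y, f y * (Γ y x : ℂ) ∂μ) = 0) :=
  fun Z hZ hμZ hμZ1 ↦ strongly_connected_implies_irreducible_general μ Γ (hΓ.integrable_uncurry _)
    hconn 2 Z hZ hμZ (by rwa [prob_compl_eq_one_sub hZ, tsub_pos_iff_lt])

end Digraphon
end
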